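/- arXiv:1804.02511 — 2 statements merged into one kernel-verified Lean document; each statement's English description precedes it below -/
import Mathlib

section
/- If K is a classical knot diagram (a virtual knot diagram with no virtual crossings), then every classical crossing c of K has weight W(c) = 0, and consequently P_K(t) = 0. -/
/-!
# Virtual knots and links via signed Gauss codes

A virtual knot or link diagram, up to the virtual Reidemeister moves and the
detour move, is faithfully encoded by its signed oriented Gauss code: the
cyclic sequence, along each component, of passages through the classical
crossings, each passage recording the crossing's name, whether the strand
passes over or under, and the crossing sign.  Virtual crossings and the
detour move are invisible in this encoding, so oriented virtual isotopy is
generated by the oriented classical Reidemeister moves together with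
re-encoding moves (rotation of the base point, permutation of the components,
renaming of the crossings).
-/

open LaurentPolynomial

/-- A passage of a strand through a classical crossing of a virtual diagram. -/
structure Passage where
  id : ℕ
  isOver : Bool
  sign : ℤ
  deriving DecidableEq, Repr

instance : Inhabited Passage := ⟨⟨0, false, 0⟩⟩

/-- The affine-label increment when the strand passes through a crossing:
crossing to the left increases the label by one, crossing to the right
decreases it by one.  For a positive crossing the over-strand crosses to the
right and the under-strand to the left; for a negative crossing it is the
other way around.  Labels are unchanged at virtual crossings. -/
def Passage.inc (p : Passage) : ℤ := if p.isOver then -p.sign else p.sign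

/-- The Gauss code of one oriented circle component. -/
abbrev KCode := List Passage

/-- The list of classical crossing names appearing in a code. -/
def crossIds (a : KCode) : List ℕ := (a.map Passage.id).dedup

/-- The number of classical crossings. -/
def numCross (a : KCode) : ℕ := (crossIds a).length

/-- A valid knot code: every crossing has sign `±1` and occurs exactly once as
an over-passage and exactly once as an under-passage, with consistent sign. -/
def ValidK (a : KCode) : Prop :=
  ∀ p ∈ a, (p.sign = 1 ∨ p.sign = -1) ∧
    (a.filter (fun q => q.id == p.id && q.isOver)).length = 1 ∧
    (a.filter (fun q => q.id == p.id && !q.isOver)).length = 1 ∧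
    (∀ q ∈ a, q.id = p.id → q.sign = p.sign)

/-- The canonical affine label of the arc entering the `k`-th passage
(base label `0` on the arc entering the `0`-th passage). -/
def labelAt (a : KCode) (k : ℕ) : ℤ := ((a.take k).map Passage.inc).sum

/-- Position of the over-passage of crossing `i`. -/
def overPos (a : KCode) (i : ℕ) : ℕ := a.findIdx (fun p => p.id == i && p.isOver)

/-- Position of the under-passage of crossing `i`. -/
def underPos (a : KCode) (i : ℕ) : ℕ := a.findIdx (fun p => p.id == i && !p.isOver)

/-- The sign of crossing `i`. -/
def sgn (a : KCode) (i : ℕ) : ℤ :=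
  ((a.find? (fun p => p.id == i)).map Passage.sign).getD 0

/-- The weight `W_K(c)` of a crossing `c`: with incoming labels `a` (left) and
`b` (right) it is `W₊ = a - b - 1` if `sgn c = 1` and `W₋ = b - a + 1` if
`sgn c = -1`; equivalently it is
(label entering the over-passage) − (label entering the under-passage) − sign. -/
def wt (a : KCode) (i : ℕ) : ℤ :=
  labelAt a (overPos a i) - labelAt a (underPos a i) - sgn a i

/-- The affine index polynomial `P_K(t) = ∑_c sgn(c) (t^{W_K(c)} - 1)`. -/
noncomputable def affP (a : KCode) : LaurentPolynomial ℤ :=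
  ((crossIds a).map (fun i => (C (sgn a i)) * (T (wt a i) - 1))).sum

/-- The signed crossing count `wr_n(K) = ∑_{c : W_K(c) = n} sgn(c)`. -/
def wrn (a : KCode) (n : ℤ) : ℤ :=
  (((crossIds a).filter (fun i => wt a i == n)).map (sgn a)).sum

/-- A crossing is odd when it flanks an odd number of symbols of the Gauss
code, i.e. when the positions of its two passages differ by an even number. -/
def OddCross (a : KCode) (i : ℕ) : Bool := (overPos a i + underPos a i) % 2 == 0

/-- The odd writhe `J(K)`: the sum of the signs of the odd crossings. -/
def oddWrithe (a : KCode) : ℤ := (((crossIds a).filter (OddCross a)).map (sgn a)).sum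

/-- The reverse `K̄` of `K`: the same diagram with reversed orientation. -/
def reverseK (a : KCode) : KCode := a.reverse

/-- The (flat) mirror image `K*`: every classical crossing is switched, which
exchanges over- and under-passages and reverses all crossing signs. -/
def switchAll (a : KCode) : KCode := a.map (fun p => ⟨p.id, !p.isOver, -p.sign⟩)

/-- The vertical mirror image `K^!`: reflect the diagram in a plane
perpendicular to the plane of the diagram (which keeps the over/under data
and reverses all crossing signs) and reverse the orientation. -/
def vmirror (a : KCode) : KCode := (a.map (fun p => ⟨p.id, p.isOver, -p.sign⟩)).reverse

/-- Rename the crossings of a code by `f`. -/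
def relabel (f : ℕ → ℕ) (a : KCode) : KCode := a.map (fun p => { p with id := f p.id })

/-! ## Links -/

/-- A link code: a list of circle components. -/
abbrev LCode := List KCode

/-- Validity of a link code: the crossing data is globally consistent. -/
def ValidLink (L : LCode) : Prop := ValidK L.flatten

def crossIdsL (L : LCode) : List ℕ := crossIds L.flatten

def sgnL (L : LCode) (i : ℕ) : ℤ := sgn L.flatten i

/-- An affine (integer) labeling of the arcs of a link diagram:
`lab c k` is the label of the arc entering the `k`-th passage of the `c`-th
component; at each classical crossing with left incoming label `a` and right
incoming label `b`, the left outgoing label is `b+1` and the right outgoing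
label is `a-1`, i.e. passing through a passage changes the label by its
increment.  Labels are unchanged at virtual crossings. -/
def IsAffineLabeling (L : LCode) (lab : ℕ → ℕ → ℤ) : Prop :=
  ∀ c, c < L.length → ∀ k, k < (L.getD c []).length →
    lab c ((k + 1) % (L.getD c []).length) =
      lab c k + ((L.getD c []).getD k default).inc

/-- Locations `(component, position)` of the passages of crossing `i` that are
over-passages (`sel = true`) resp. under-passages (`sel = false`). -/
def locs (L : LCode) (i : ℕ) (sel : Bool) : List (ℕ × ℕ) :=
  (List.range L.length).flatMap (fun c =>
    (List.range (L.getD c []).length).filterMap (fun k =>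
      if ((L.getD c []).getD k default).id = i ∧ ((L.getD c []).getD k default).isOver = sel
      then some (c, k) else none))

/-- The weight of crossing `i` of a link diagram with affine labeling `lab`. -/
def wtL (L : LCode) (lab : ℕ → ℕ → ℤ) (i : ℕ) : ℤ :=
  lab ((locs L i true).headD (0, 0)).1 ((locs L i true).headD (0, 0)).2
    - lab ((locs L i false).headD (0, 0)).1 ((locs L i false).headD (0, 0)).2
    - sgnL L i

/-- The affine index polynomial of an affinely labeled link diagram. -/
noncomputable def affPL (L : LCode) (lab : ℕ → ℕ → ℤ) : LaurentPolynomial ℤ :=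
  ((crossIdsL L).map (fun i => (C (sgnL L i)) * (T (wtL L lab i) - 1))).sum

/-- The passages of component `c` whose partner passage lies on a different
component. -/
def crossPassages (L : LCode) (c : ℕ) : KCode :=
  (L.getD c []).filter (fun p =>
    ((L.getD c []).filter (fun q => q.id == p.id)).length == 1)

/-- The algebraic intersection number of component `c` with the union of the
other components: the signed count, in the plane, of the crossings of
component `c` with the other components (the strand crossing to the left
counts `+1`, to the right `−1`). -/
def algInt (L : LCode) (c : ℕ) : ℤ := ((crossPassages L c).map Passage.inc).sum

/-- A multi-component diagram is compatible when every component has algebraic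
intersection number zero with the union of the other components. -/
def Compatible (L : LCode) : Prop := ∀ c < L.length, algInt L c = 0

/-! ## Virtual isotopy

Link codes whose components carry an inert tracking label (a natural number);
the labels are preserved by isotopy and are used to follow components through
the births, deaths and saddles of a cobordism. -/

abbrev LLC := List (ℕ × KCode)

def plainL (L : LLC) : LCode := L.map Prod.snd

def idsOf (L : LLC) : List ℕ := crossIdsL (plainL L)

def pieceIds (L : LLC) : List ℕ := L.map Prod.fst

/-- `ReplC c c' segs segs'`: the circle `c'` is obtained from the circle `c`
by replacing, scanning from left to right, an initial batch of the listed
segments (`u` is replaced by `v` for each pair `(u, v)`), leaving `segs'`. -/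
inductive ReplC : KCode → KCode → List (KCode × KCode) → List (KCode × KCode) → Prop
  | nil (c : KCode) (segs : List (KCode × KCode)) : ReplC c c segs segs
  | cons {y y' : KCode} {segs segs' : List (KCode × KCode)} (x u v : KCode) :
      ReplC y y' segs segs' →
      ReplC (x ++ u ++ y) (x ++ v ++ y') ((u, v) :: segs) segs'

/-- `ReplL L L' segs`: the labeled link `L'` is obtained from `L` by
simultaneously performing all the listed segment replacements, in scanning
order. -/
inductive ReplL : LLC → LLC → List (KCode × KCode) → Prop
  | nil : ReplL [] [] []
  | cons {c c' : KCode} {L L' : LLC} {segs segs' : List (KCode × KCode)} (k : ℕ) :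
      ReplC c c' segs segs' → ReplL L L' segs' → ReplL ((k, c) :: L) ((k, c') :: L') segs

/-- `if b then [p, q] else [q, p]`. -/
def pairOf (b : Bool) (p q : Passage) : KCode := if b then [p, q] else [q, p]

/-- A generating move of oriented virtual isotopy on Gauss codes.  The
constructors `perm`, `rotate`, `rename` are inessential re-encodings; in
particular the virtual Reidemeister moves and the detour move leave the Gauss
code unchanged.  The constructors `r1`, `r2`, `r3` are the oriented classical
Reidemeister moves (`r1` and `r2` are stated as insertions; the inverse moves
are recovered by taking the symmetric closure). -/
inductive MoveStep : LLC → LLC → Prop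
  /-- re-ordering the components -/
  | perm {L L' : LLC} (h : L.Perm L') : MoveStep L L'
  /-- moving the base point of a component -/
  | rotate (k : ℕ) (x y : KCode) (L : LLC) :
      MoveStep ((k, x ++ y) :: L) ((k, y ++ x) :: L)
  /-- renaming the crossings injectively -/
  | rename {L : LLC} (f : ℕ → ℕ) (hf : Function.Injective f) :
      MoveStep L (L.map (fun c => (c.1, relabel f c.2)))
  /-- first Reidemeister move: insertion of a kink with a fresh crossing `i` -/
  | r1 {L L' : LLC} (i : ℕ) (o : Bool) (s : ℤ) (hs : s = 1 ∨ s = -1) (hi : i ∉ idsOf L)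
      (h : ReplL L L' [([], [⟨i, o, s⟩, ⟨i, !o, s⟩])]) : MoveStep L L'
  /-- second Reidemeister move: one strand slides across another, creating two
  fresh crossings `i, j` with opposite signs; `o` records whether the first
  strand passes over, `ord` the relative orientation of the strands. -/
  | r2 {L L' : LLC} (i j : ℕ) (o ord : Bool) (s : ℤ) (hs : s = 1 ∨ s = -1)
      (hij : i ≠ j) (hi : i ∉ idsOf L) (hj : j ∉ idsOf L)
      (h : ReplL L L'
        [([], [⟨i, o, s⟩, ⟨j, o, -s⟩]),
         ([], if ord then [⟨j, !o, -s⟩, ⟨i, !o, s⟩] else [⟨i, !o, s⟩, ⟨j, !o, -s⟩])]) :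
      MoveStep L L'
  /-- third Reidemeister move: a strand slides across a crossing.  Crossing
  `i` joins the top and the middle strand, `j` the top and the bottom strand,
  `k` the middle and the bottom strand; on each of the three strands the
  corresponding pair of adjacent passages is transposed.  The product of the
  three signs is `+1`, and the orders of the pairs along the strands are
  correlated with the signs as dictated by the orientations of the three
  strands (`t` records the order along the top strand). -/
  | r3 {L L' : LLC} (i j k : ℕ) (si sj sk : ℤ)
      (hsi : si = 1 ∨ si = -1) (hsj : sj = 1 ∨ sj = -1) (hsk : sk = 1 ∨ sk = -1)
      (hprod : si * sj * sk = 1)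
      (hij : i ≠ j) (hik : i ≠ k) (hjk : j ≠ k)
      (t : Bool) (segs : List (KCode × KCode))
      (hsegs : segs.Perm
        [(pairOf t ⟨i, true, si⟩ ⟨j, true, sj⟩,
          pairOf (!t) ⟨i, true, si⟩ ⟨j, true, sj⟩),
         (pairOf (t == (sj * sk == 1)) ⟨i, false, si⟩ ⟨k, true, sk⟩,
          pairOf (!(t == (sj * sk == 1))) ⟨i, false, si⟩ ⟨k, true, sk⟩),
         (pairOf (t == (si * sk == 1)) ⟨j, false, sj⟩ ⟨k, false, sk⟩,
          pairOf (!(t == (si * sk == 1))) ⟨j, false, sj⟩ ⟨k, false, sk⟩)])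
      (h : ReplL L L' segs) : MoveStep L L'

/-- Oriented virtual isotopy: the equivalence relation generated by the
classical Reidemeister moves, the virtual Reidemeister moves and the detour
move (the latter two being invisible on Gauss codes). -/
def Isotopic : LLC → LLC → Prop := Relation.EqvGen MoveStep

/-! ## Cobordism

A cobordism is a sequence of isotopies, births and deaths of unknotted
circles, and oriented saddle moves.  The schema of a cobordism is the abstract
surface it generates; we track its connected pieces through the component
labels, the genus of each piece, and the total genus of the pieces that have
been closed off, so that the genus of the schema is well defined. -/

/-- A state of a cobordism in progress: the current labeled link diagram (the
label of a circle names the surface piece it bounds), the genus of each piece,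
and the accumulated genus of closed-off pieces. -/
structure CobState where
  link : LLC
  genus : ℕ → ℕ
  closed : ℕ

/-- One step of a virtual cobordism. -/
inductive CobStep : CobState → CobState → Prop
  /-- a virtual isotopy move -/
  | isot {L L' : LLC} (g : ℕ → ℕ) (c : ℕ) (h : MoveStep L L') :
      CobStep ⟨L, g, c⟩ ⟨L', g, c⟩
  /-- birth of an unknotted circle, starting a fresh piece of genus `0` -/
  | birth (k : ℕ) (L : LLC) (g : ℕ → ℕ) (c : ℕ) (hk : k ∉ pieceIds L) :
      CobStep ⟨L, g, c⟩ ⟨(k, []) :: L, Function.update g k 0, c⟩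
  /-- death of an unknotted circle whose piece still has other boundary -/
  | death_keep (k : ℕ) (L : LLC) (g : ℕ → ℕ) (c : ℕ) (hk : k ∈ pieceIds L) :
      CobStep ⟨(k, []) :: L, g, c⟩ ⟨L, g, c⟩
  /-- death of an unknotted circle closing off its piece -/
  | death_close (k : ℕ) (L : LLC) (g : ℕ → ℕ) (c : ℕ) (hk : k ∉ pieceIds L) :
      CobStep ⟨(k, []) :: L, g, c⟩ ⟨L, g, c + g k⟩
  /-- oriented saddle splitting one circle into two (genus unchanged) -/
  | saddle_split (k : ℕ) (x y : KCode) (L : LLC) (g : ℕ → ℕ) (c : ℕ) :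
      CobStep ⟨(k, x ++ y) :: L, g, c⟩ ⟨(k, x) :: (k, y) :: L, g, c⟩
  /-- oriented saddle merging two boundary circles of the same piece
  (the genus of the piece increases by one) -/
  | saddle_merge_same (k : ℕ) (x y : KCode) (L : LLC) (g : ℕ → ℕ) (c : ℕ) :
      CobStep ⟨(k, x) :: (k, y) :: L, g, c⟩
        ⟨(k, x ++ y) :: L, Function.update g k (g k + 1), c⟩
  /-- oriented saddle merging boundary circles of two different pieces
  (the pieces merge and their genera add) -/
  | saddle_merge_diff (j k : ℕ) (x y : KCode) (L : LLC) (g : ℕ → ℕ) (c : ℕ)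
      (hjk : j ≠ k) :
      CobStep ⟨(j, x) :: (k, y) :: L, g, c⟩
        ⟨(j, x ++ y) :: (L.map fun p => if p.1 = k then (j, p.2) else p),
          Function.update (Function.update g j (g j + g k)) k 0, c⟩

/-- A virtual cobordism: a finite sequence of cobordism steps. -/
def Cob : CobState → CobState → Prop := Relation.ReflTransGen CobStep

/-- `L` and `L'` cobound a virtual cobordism (of some genus). -/
def Cobordant (L L' : LLC) : Prop :=
  ∃ g' c', Cob ⟨L, fun _ => 0, 0⟩ ⟨L', g', c'⟩

/-- The knot `a` bounds a virtual surface schema of genus `G`: there is a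
virtual cobordism from `a` to the empty link, and `G` is the total genus of
the pieces of its schema. -/
def BoundsGenus (a : KCode) (G : ℕ) : Prop :=
  ∃ g' : ℕ → ℕ, Cob ⟨[(0, a)], fun _ => 0, 0⟩ ⟨[], g', G⟩

/-! ## Concordance

A genus-zero cobordism (concordance) is one in which every critical point is
paired: each birth is paired with a canceling saddle and each death with a
canceling saddle.  An elementary concordance is a birth followed (after
isotopy) by a saddle amalgamating the born circle, or a saddle splitting off a
circle that (after isotopy) dies. -/

/-- One step of a concordance. -/
inductive ConcStep : LLC → LLC → Prop
  /-- a virtual isotopy -/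
  | isot {L L' : LLC} (h : Isotopic L L') : ConcStep L L'
  /-- elementary concordance: birth of an unknotted circle (tracked by the
  fresh label `k`), isotopy, then an oriented saddle amalgamating the born
  circle with another component -/
  | birth_saddle {L rest : LLC} (j k : ℕ) (x y : KCode)
      (hk : k ∉ pieceIds L)
      (h : Isotopic ((k, []) :: L) ((j, x) :: (k, y) :: rest)) :
      ConcStep L ((j, x ++ y) :: rest)
  /-- elementary concordance: an oriented saddle splitting off a circle
  (tracked by the fresh label `k`) which after isotopy is an unknotted,
  unlinked circle and dies -/
  | saddle_death {M rest : LLC} (j k : ℕ) (x y : KCode)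
      (hk : k ∉ pieceIds ((j, x ++ y) :: M))
      (h : Isotopic ((j, x) :: (k, y) :: M) ((k, []) :: rest)) :
      ConcStep ((j, x ++ y) :: M) rest

/-- Virtual concordance: genus-zero virtual cobordism. -/
def Concordant : LLC → LLC → Prop := Relation.EqvGen ConcStep

/-- Virtual concordance of knots. -/
def ConcordantK (a b : KCode) : Prop := Concordant [(0, a)] [(0, b)]

/-- The unknot: a circle with no classical crossings. -/
def unknotCode : KCode := []

/-- A virtual knot is (virtually) slice when it is virtually concordant to
the unknot. -/
def SliceK (a : KCode) : Prop := ConcordantK a unknotCode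

/-! ## Seifert circles and faces -/

/-- The position of the other passage of the crossing visited at position `k`. -/
def partnerIdx (a : KCode) (k : ℕ) : ℕ :=
  ((List.range a.length).filter
    (fun j => j != k && (a.getD j default).id == (a.getD k default).id)).headD 0

/-- Traversal of the diagram obtained by the oriented smoothing of every
classical crossing: from the arc entering passage `k+1` one exits along the
arc leaving the partner passage. -/
def seifNext (a : KCode) (k : ℕ) : ℕ := partnerIdx a ((k + 1) % a.length)

/-- A canonical representative of the Seifert circle through arc `k`. -/
def seifRep (a : KCode) (k : ℕ) : ℕ :=
  ((List.range a.length).map (fun t => (seifNext a)^[t] k)).foldr min k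

/-- The number of (virtual) Seifert circles: the number of cycles of the
oriented smoothing of all classical crossings.  A crossingless circle is a
single Seifert circle. -/
def seifertCount (a : KCode) : ℕ :=
  if a.length = 0 then 1 else ((List.range a.length).map (seifRep a)).dedup.length

/-- The counterclockwise-next edge-end around a crossing.  An edge-end is a
pair (position, isIn): the head (`isIn = true`) or the tail (`isIn = false`)
of an arc at the passage at that position. -/
def nextEnd (a : KCode) (e : ℕ × Bool) : ℕ × Bool :=
  let p := a.getD e.1 default
  (partnerIdx a e.1, if p.isOver == (p.sign == 1) then e.2 else !e.2)

/-- The edge-end at which a directed arc (a dart) arrives. -/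
def headEnd (a : KCode) (d : ℕ × Bool) : ℕ × Bool :=
  if d.2 then ((d.1 + 1) % a.length, true) else (d.1, false)

/-- The dart leaving along a given edge-end. -/
def dartFrom (a : KCode) (e : ℕ × Bool) : ℕ × Bool :=
  if e.2 then ((e.1 + a.length - 1) % a.length, false) else (e.1, true)

/-- The face-tracing successor of a dart. -/
def faceNext (a : KCode) (d : ℕ × Bool) : ℕ × Bool :=
  dartFrom a (nextEnd a (headEnd a d))

def encDart (d : ℕ × Bool) : ℕ := 2 * d.1 + (if d.2 then 1 else 0)

/-- A canonical representative of the face through a given dart. -/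
def faceRep (a : KCode) (d : ℕ × Bool) : ℕ :=
  ((List.range (2 * a.length)).map (fun t => encDart ((faceNext a)^[t] d))).foldr
    min (encDart d)

/-- The number of faces of the abstract (ribbon) diagram of a code. -/
def numFaces (a : KCode) : ℕ :=
  (((List.range a.length).flatMap (fun k => [(k, true), (k, false)])).map
    (faceRep a)).dedup.length

/-- A knot code is classical when its underlying abstract diagram is planar,
i.e. (by Euler's formula) when it has `n + 2` faces, `n` being the number of
crossings.  Classical knot diagrams are exactly the virtual knot diagrams
having a realization with no virtual crossings. -/
def IsClassical (a : KCode) : Prop := a = [] ∨ numFaces a = numCross a + 2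

/-! ## Flat diagrams -/

/-- A passage of a flat (no over/under information) virtual knot diagram:
`left = true` when the other strand crosses to the left, so that the affine
label increases by one. -/
structure FlatPassage where
  id : ℕ
  left : Bool
  deriving DecidableEq, Repr

instance : Inhabited FlatPassage := ⟨⟨0, false⟩⟩

/-- The label increment at a flat passage. -/
def FlatPassage.inc (p : FlatPassage) : ℤ := if p.left then 1 else -1

/-- A valid flat knot code: each crossing is traversed exactly twice, once
with increment `+1` and once with increment `-1`. -/
def ValidFlat (a : List FlatPassage) : Prop :=
  ∀ p ∈ a, (a.filter (fun q => q.id == p.id && q.left)).length = 1 ∧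
    (a.filter (fun q => q.id == p.id && !q.left)).length = 1

/-- An affine labeling of a flat knot diagram: `lab k` is the label of the arc
entering the `k`-th passage, and passing a crossing changes the label by the
increment of the passage. -/
def IsFlatLabeling (a : List FlatPassage) (lab : ℕ → ℤ) : Prop :=
  ∀ k, k < a.length → lab ((k + 1) % a.length) = lab k + (a.getD k default).inc

namespace ClassicalWeights

/-- The `keep` flag of a passage, as used by `nextEnd`. -/
def kap (a : KCode) (k : ℕ) : Bool :=
  (a.getD k default).isOver == ((a.getD k default).sign == 1)

lemma filter_unique {α : Type*} (l : List α) (p : α → Bool) (h : (l.filter p).length = 1)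
    (i j : ℕ) (hij : i < j) (hj : j < l.length) (hpi : p (l[i]'(by omega)) = true)
    (hpj : p l[j] = true) : False := by
  have h1 : l = l.take j ++ l.drop j := (List.take_append_drop j l).symm
  have h2 : (l.filter p).length = ((l.take j).filter p).length + ((l.drop j).filter p).length := by
    conv_lhs => rw [h1]
    rw [List.filter_append, List.length_append]
  have h3 : 0 < ((l.take j).filter p).length := by
    apply List.length_pos_of_mem (a := l[i]'(by omega))
    rw [List.mem_filter]
    refine ⟨?_, hpi⟩
    rw [List.mem_take_iff_getElem]
    exact ⟨i, by omega, rfl⟩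
  have h4 : 0 < ((l.drop j).filter p).length := by
    apply List.length_pos_of_mem (a := l[j])
    rw [List.mem_filter]
    refine ⟨?_, hpj⟩
    rw [List.mem_drop_iff_getElem]
    exact ⟨0, by omega, by simp⟩
  omega

lemma pos_unique (a : KCode) (ha : ValidK a) (j k : ℕ) (hj : j < a.length) (hk : k < a.length)
    (hid : (a.getD j default).id = (a.getD k default).id)
    (ho : (a.getD j default).isOver = (a.getD k default).isOver) : j = k := by
  rw [List.getD_eq_getElem _ _ hj, List.getD_eq_getElem _ _ hk] at hid ho
  have key : ∀ i l : ℕ, ∀ (hi : i < a.length) (hl : l < a.length),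
      a[i].id = a[l].id → a[i].isOver = a[l].isOver → ¬ i < l := by
    intro i l hi hl hid ho hlt
    obtain ⟨-, h1, h2, -⟩ := ha a[l] (List.getElem_mem hl)
    cases hb : a[l].isOver
    · exact filter_unique a _ h2 i l hlt hl (by simp [hid, ho, hb]) (by simp [hb])
    · exact filter_unique a _ h1 i l hlt hl (by simp [hid, ho, hb]) (by simp [hb])
  have h1 := key j k hj hk hid ho
  have h2 := key k j hk hj hid.symm ho.symm
  omega

lemma exists_pos (a : KCode) (ha : ValidK a) (k : ℕ) (hk : k < a.length) (b : Bool) :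
    ∃ j < a.length, (a.getD j default).id = (a.getD k default).id ∧
      (a.getD j default).isOver = b := by
  obtain ⟨-, h1, h2, -⟩ := ha a[k] (List.getElem_mem hk)
  have h3 : 0 < (a.filter (fun q => q.id == a[k].id && (q.isOver == b))).length := by
    cases b <;> simp_all
  obtain ⟨q, hq⟩ := List.exists_mem_of_length_pos h3
  rw [List.mem_filter] at hq
  obtain ⟨hq, hq2⟩ := hq
  obtain ⟨j, hj, rfl⟩ := List.mem_iff_getElem.1 hq
  refine ⟨j, hj, ?_⟩
  rw [List.getD_eq_getElem _ _ hj, List.getD_eq_getElem _ _ hk]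
  simpa using hq2

lemma sign_eq (a : KCode) (ha : ValidK a) (j k : ℕ) (hj : j < a.length) (hk : k < a.length)
    (hid : (a.getD j default).id = (a.getD k default).id) :
    (a.getD j default).sign = (a.getD k default).sign := by
  rw [List.getD_eq_getElem _ _ hj, List.getD_eq_getElem _ _ hk] at *
  exact (ha a[k] (List.getElem_mem hk)).2.2.2 _ (List.getElem_mem hj) hid

lemma sign_pm (a : KCode) (ha : ValidK a) (k : ℕ) (hk : k < a.length) :
    (a.getD k default).sign = 1 ∨ (a.getD k default).sign = -1 := by
  rw [List.getD_eq_getElem _ _ hk]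
  exact (ha a[k] (List.getElem_mem hk)).1

lemma partner_spec (a : KCode) (ha : ValidK a) (k : ℕ) (hk : k < a.length) :
    partnerIdx a k < a.length ∧
    (a.getD (partnerIdx a k) default).id = (a.getD k default).id ∧
    (a.getD (partnerIdx a k) default).isOver = !(a.getD k default).isOver := by
  obtain ⟨j, hj, hid, ho⟩ := exists_pos a ha k hk (!(a.getD k default).isOver)
  have hmem : j ∈ (List.range a.length).filter
    (fun j => j != k && (a.getD j default).id == (a.getD k default).id) := by
    rw [List.mem_filter, List.mem_range]
    refine ⟨hj, ?_⟩
    have : j ≠ k := by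
      rintro rfl
      simp at ho
    rw [hid]
    simp [this]
  have hm2 : partnerIdx a k ∈ (List.range a.length).filter
    (fun j => j != k && (a.getD j default).id == (a.getD k default).id) := by
    unfold partnerIdx
    generalize (List.range a.length).filter
      (fun j => j != k && (a.getD j default).id == (a.getD k default).id) = l at *
    cases l with
    | nil => simp at hmem
    | cons x xs => simp
  rw [List.mem_filter, List.mem_range] at hm2
  obtain ⟨h1, h2⟩ := hm2
  rw [Bool.and_eq_true, bne_iff_ne, beq_iff_eq] at h2
  refine ⟨h1, h2.2, ?_⟩
  by_contra hne
  apply h2.1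
  apply pos_unique a ha _ _ h1 hk h2.2
  cases h : (a.getD k default).isOver <;> simp_all

lemma partner_partner (a : KCode) (ha : ValidK a) (k : ℕ) (hk : k < a.length) :
    partnerIdx a (partnerIdx a k) = k := by
  obtain ⟨h1, h2, h3⟩ := partner_spec a ha k hk
  obtain ⟨h4, h5, h6⟩ := partner_spec a ha _ h1
  apply pos_unique a ha _ _ h4 hk (h5.trans h2)
  rw [h6, h3, Bool.not_not]

lemma kap_partner (a : KCode) (ha : ValidK a) (k : ℕ) (hk : k < a.length) :
    kap a (partnerIdx a k) = !kap a k := by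
  obtain ⟨h1, h2, h3⟩ := partner_spec a ha k hk
  have h4 := sign_eq a ha _ _ h1 hk h2
  unfold kap
  rw [h3, h4]
  cases (a.getD k default).isOver <;> cases ((a.getD k default).sign == 1) <;> rfl

lemma inc_kap (a : KCode) (ha : ValidK a) (k : ℕ) (hk : k < a.length) :
    (a.getD k default).inc = if kap a k then -1 else 1 := by
  unfold kap Passage.inc
  rcases sign_pm a ha k hk with h | h <;> rw [h] <;>
  cases (a.getD k default).isOver <;> simp

/-! ### The face permutation -/

lemma nextEnd_eq (a : KCode) (e : ℕ × Bool) :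
    nextEnd a e = (partnerIdx a e.1, if kap a e.1 then e.2 else !e.2) := rfl

lemma pred_lt (m k : ℕ) (hk : k < m) : (k + m - 1) % m < m := Nat.mod_lt _ (by omega)

lemma succ_pred (m k : ℕ) (hk : k < m) : ((k + m - 1) % m + 1) % m = k := by
  rw [Nat.mod_add_mod, show k + m - 1 + 1 = k + m by omega, Nat.add_mod_right, Nat.mod_eq_of_lt hk]

lemma pred_succ (m k : ℕ) (hk : k < m) : ((k + 1) % m + m - 1) % m = k := by
  by_cases h : k + 1 = m
  · subst h
    simp
  · rw [Nat.mod_eq_of_lt (a := k + 1) (by omega), show k + 1 + m - 1 = k + m by omega,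
      Nat.add_mod_right, Nat.mod_eq_of_lt hk]

lemma faceNext_lt (a : KCode) (ha : ValidK a) (d : ℕ × Bool) (hd : d.1 < a.length) :
    (faceNext a d).1 < a.length := by
  have h1 : (headEnd a d).1 < a.length := by
    unfold headEnd
    split
    · exact Nat.mod_lt _ (by omega)
    · exact hd
  have h2 : (nextEnd a (headEnd a d)).1 < a.length := (partner_spec a ha _ h1).1
  unfold faceNext dartFrom
  split
  · exact pred_lt _ _ h2
  · exact h2

lemma headEnd_lt (a : KCode) (d : ℕ × Bool) (hd : d.1 < a.length) :
    (headEnd a d).1 < a.length := by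
  unfold headEnd
  split
  · exact Nat.mod_lt _ (by omega)
  · exact hd

lemma headEnd_inj (a : KCode) (d e : ℕ × Bool) (hd : d.1 < a.length)
    (he : e.1 < a.length) (h : headEnd a d = headEnd a e) : d = e := by
  obtain ⟨k, b⟩ := d
  obtain ⟨l, c⟩ := e
  cases b <;> cases c <;> simp [headEnd] at h ⊢
  · exact h
  · have h1 := pred_succ _ _ hd
    have h2 := pred_succ _ _ he
    dsimp only at h1 h2
    rw [← h1, ← h2, h]

lemma dartFrom_inj (a : KCode) (d e : ℕ × Bool) (hd : d.1 < a.length)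
    (he : e.1 < a.length) (h : dartFrom a d = dartFrom a e) : d = e := by
  obtain ⟨k, b⟩ := d
  obtain ⟨l, c⟩ := e
  cases b <;> cases c <;> simp [dartFrom] at h ⊢
  · exact h
  · have h1 := succ_pred _ _ hd
    have h2 := succ_pred _ _ he
    dsimp only at h1 h2
    rw [← h1, ← h2, h]

lemma faceNext_inj (a : KCode) (ha : ValidK a) (d e : ℕ × Bool) (hd : d.1 < a.length)
    (he : e.1 < a.length) (h : faceNext a d = faceNext a e) : d = e := by
  have hd1 := headEnd_lt a d hd
  have he1 := headEnd_lt a e he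
  apply headEnd_inj a d e hd he
  generalize hx : headEnd a d = x at *
  generalize hy : headEnd a e = y at *
  unfold faceNext at h
  rw [hx, hy] at h
  have h2 := dartFrom_inj a _ _ (partner_spec a ha _ hd1).1 (partner_spec a ha _ he1).1 h
  rw [nextEnd_eq, nextEnd_eq, Prod.mk.injEq] at h2
  obtain ⟨h3, h4⟩ := h2
  have h5 : x.1 = y.1 := by
    rw [← partner_partner a ha _ hd1, ← partner_partner a ha _ he1, h3]
  rw [h5] at h4
  refine Prod.ext h5 ?_
  cases hk : kap a y.1 <;> simp [hk] at h4 <;> exact h4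

lemma iter_lt (a : KCode) (ha : ValidK a) (d : ℕ × Bool) (hd : d.1 < a.length) (t : ℕ) :
    ((faceNext a)^[t] d).1 < a.length := by
  induction t with
  | zero => exact hd
  | succ t ih =>
    rw [Function.iterate_succ_apply']
    exact faceNext_lt a ha _ ih

lemma iter_cancel (a : KCode) (ha : ValidK a) (d e : ℕ × Bool) (hd : d.1 < a.length)
    (he : e.1 < a.length) (t : ℕ) (h : (faceNext a)^[t] d = (faceNext a)^[t] e) : d = e := by
  induction t with
  | zero => exact h
  | succ t ih =>
    rw [Function.iterate_succ_apply', Function.iterate_succ_apply'] at h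
    exact ih (faceNext_inj a ha _ _ (iter_lt a ha d hd t) (iter_lt a ha e he t) h)

lemma exists_period (a : KCode) (ha : ValidK a) (d : ℕ × Bool) (hd : d.1 < a.length) :
    ∃ p, 0 < p ∧ p ≤ 2 * a.length ∧ (faceNext a)^[p] d = d := by
  have hc : (Finset.range a.length ×ˢ (Finset.univ : Finset Bool)).card
      < (Finset.range (2 * a.length + 1)).card := by
    simp [Finset.card_product]
    omega
  obtain ⟨s, hs, t, ht, hne, heq⟩ := Finset.exists_ne_map_eq_of_card_lt_of_maps_to hc
    (f := fun t => (faceNext a)^[t] d) (by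
      intro t _
      simpa using iter_lt a ha d hd t)
  have key : ∀ s t : ℕ, s < t → t < 2 * a.length + 1 →
      (faceNext a)^[s] d = (faceNext a)^[t] d →
      ∃ p, 0 < p ∧ p ≤ 2 * a.length ∧ (faceNext a)^[p] d = d := by
    intro s t hst ht h
    refine ⟨t - s, by omega, by omega, ?_⟩
    apply iter_cancel a ha _ _ (iter_lt a ha d hd _) hd s
    rw [← Function.iterate_add_apply, show s + (t - s) = t by omega, h]
  rw [Finset.mem_range] at hs ht
  rcases Nat.lt_or_gt_of_ne hne with h | h
  · exact key s t h ht heq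
  · exact key t s h hs heq.symm

lemma le_foldr_min (l : List ℕ) (c x : ℕ) :
    x ≤ l.foldr min c ↔ x ≤ c ∧ ∀ y ∈ l, x ≤ y := by
  induction l with
  | nil => simp
  | cons y l ih =>
    simp only [List.foldr_cons, le_min_iff, ih, List.mem_cons, forall_eq_or_imp]
    tauto

lemma le_faceRep (a : KCode) (ha : ValidK a) (d : ℕ × Bool) (hd : d.1 < a.length) (x : ℕ) :
    x ≤ faceRep a d ↔ ∀ t, x ≤ encDart ((faceNext a)^[t] d) := by
  unfold faceRep
  rw [le_foldr_min]
  constructor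
  · rintro ⟨-, h⟩ t
    obtain ⟨p, hp, hp2, hpd⟩ := exists_period a ha d hd
    have h1 : Function.IsPeriodicPt (faceNext a) p d := hpd
    rw [← h1.iterate_mod_apply]
    apply h
    rw [List.mem_map]
    exact ⟨t % p, List.mem_range.2 (lt_of_lt_of_le (Nat.mod_lt _ hp) hp2), rfl⟩
  · intro h
    refine ⟨h 0, ?_⟩
    intro y hy
    obtain ⟨t, -, rfl⟩ := List.mem_map.1 hy
    exact h t

lemma faceRep_faceNext (a : KCode) (ha : ValidK a) (d : ℕ × Bool) (hd : d.1 < a.length) :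
    faceRep a (faceNext a d) = faceRep a d := by
  apply eq_of_forall_le_iff
  intro x
  rw [le_faceRep a ha _ (faceNext_lt a ha d hd), le_faceRep a ha d hd]
  constructor
  · intro h t
    obtain ⟨p, hp, hp2, hpd⟩ := exists_period a ha d hd
    have := h (t + (p - 1))
    rwa [← Function.iterate_succ_apply, show (t + (p - 1)).succ = t + p by omega,
      Function.iterate_add_apply, hpd] at this
  · intro h t
    rw [← Function.iterate_succ_apply]
    exact h _

/-! ### Functions on darts that are constant on faces -/

/-- Invariance of a function on darts under face tracing. -/
def Inv (a : KCode) (f : ℕ × Bool → ℚ) : Prop :=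
  ∀ d : ℕ × Bool, d.1 < a.length → f (faceNext a d) = f d

/-- Cyclic predecessor of a position. -/
def prd (a : KCode) (k : ℕ) : ℕ := (k + a.length - 1) % a.length

lemma inv_local (a : KCode) (ha : ValidK a) (f : ℕ × Bool → ℚ) (hf : Inv a f) (j : ℕ)
    (hj : j < a.length) (hk : kap a j = true) :
    f (prd a j, true) = f (prd a (partnerIdx a j), false) ∧
    f (j, false) = f (partnerIdx a j, true) ∧
    f (prd a (partnerIdx a j), true) = f (j, true) ∧
    f (partnerIdx a j, false) = f (prd a j, false) := by
  have hj' := (partner_spec a ha j hj).1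
  have hk' := kap_partner a ha j hj
  have hpp := partner_partner a ha j hj
  have h1 := hf (prd a j, true) (pred_lt _ _ hj)
  have h2 := hf (j, false) hj
  have h3 := hf (prd a (partnerIdx a j), true) (pred_lt _ _ hj')
  have h4 := hf (partnerIdx a j, false) hj'
  rw [hk] at hk'
  simp only [faceNext, headEnd, if_true, nextEnd_eq, dartFrom, prd, succ_pred _ _ hj,
    succ_pred _ _ hj', hk, hk', hpp, Bool.not_true, Bool.not_false, if_false,
    Bool.false_eq_true] at h1 h2 h3 h4
  exact ⟨h1.symm, h2.symm, h3.symm, h4.symm⟩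

/-- Jump of a dart function across an arc. -/
def jump (f : ℕ × Bool → ℚ) (k : ℕ) : ℚ := f (k, false) - f (k, true)

lemma jump_kap (a : KCode) (ha : ValidK a) (f : ℕ × Bool → ℚ) (hf : Inv a f) (j : ℕ)
    (hj : j < a.length) (hk : kap a j = true) :
    jump f (prd a j) - jump f j
      = -(jump f (prd a (partnerIdx a j)) - jump f (partnerIdx a j)) := by
  obtain ⟨h1, h2, h3, h4⟩ := inv_local a ha f hf j hj hk
  unfold jump
  linarith

lemma jump_partner (a : KCode) (ha : ValidK a) (f : ℕ × Bool → ℚ) (hf : Inv a f) (j : ℕ)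
    (hj : j < a.length) :
    jump f (prd a j) - jump f j
      = -(jump f (prd a (partnerIdx a j)) - jump f (partnerIdx a j)) := by
  cases hk : kap a j
  · have h := jump_kap a ha f hf (partnerIdx a j) (partner_spec a ha j hj).1 (by
      rw [kap_partner a ha j hj, hk]; rfl)
    rw [partner_partner a ha j hj] at h
    linarith
  · exact jump_kap a ha f hf j hj hk

lemma cyc_const (a : KCode) (g : ℕ → ℚ) (h : ∀ j < a.length, g (prd a j) = g j) :
    ∀ j < a.length, g j = g 0 := by
  intro j
  induction j with
  | zero => intro _; rfl
  | succ j ih =>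
    intro hj
    rw [← h _ hj, ← ih (by omega)]
    congr 1
    unfold prd
    rw [show j + 1 + a.length - 1 = j + a.length by omega, Nat.add_mod_right,
      Nat.mod_eq_of_lt (by omega)]

/-- If the jumps of `f` change nowhere at over-passages, they are constant. -/
lemma jump_const (a : KCode) (ha : ValidK a) (f : ℕ × Bool → ℚ) (hf : Inv a f)
    (h : ∀ j < a.length, (a.getD j default).isOver = true → jump f (prd a j) - jump f j = 0) :
    ∀ j < a.length, jump f j = jump f 0 := by
  apply cyc_const
  intro j hj
  cases ho : (a.getD j default).isOver
  · obtain ⟨h1, -, h3⟩ := partner_spec a ha j hj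
    have h4 := h _ h1 (by rw [h3, ho]; rfl)
    have h5 := jump_partner a ha f hf j hj
    linarith
  · linarith [h j hj ho]

lemma const_of_jump_zero (a : KCode) (ha : ValidK a) (f : ℕ × Bool → ℚ) (hf : Inv a f)
    (h : ∀ j < a.length, jump f j = 0) :
    ∀ d : ℕ × Bool, d.1 < a.length → f d = f (0, true) := by
  have hz : ∀ j < a.length, f (j, false) = f (j, true) := by
    intro j hj
    have := h j hj
    unfold jump at this
    linarith
  have hc : ∀ j < a.length, f (j, true) = f (0, true) := by
    apply cyc_const a (fun j => f (j, true))
    intro j hj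
    have key : ∀ j, j < a.length → kap a j = true → f (prd a j, true) = f (j, true) ∧
        f (prd a (partnerIdx a j), true) = f (partnerIdx a j, true) := by
      intro j hj hk
      obtain ⟨h1, h2, h3, h4⟩ := inv_local a ha f hf j hj hk
      have hj' := (partner_spec a ha j hj).1
      have e1 := hz j hj
      have e2 := hz _ hj'
      have e3 := hz (prd a j) (pred_lt _ _ hj)
      have e4 := hz (prd a (partnerIdx a j)) (pred_lt _ _ hj')
      constructor <;> linarith
    cases hk : kap a j
    · have h := (key (partnerIdx a j) (partner_spec a ha j hj).1 (by
        rw [kap_partner a ha j hj, hk]; rfl)).2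
      rwa [partner_partner a ha j hj] at h
    · exact (key j hj hk).1
  rintro ⟨k, b⟩ hk
  cases b
  · rw [hz k hk]
    exact hc k hk
  · exact hc k hk

/-- The finite set of faces. -/
def faceSet (a : KCode) : Finset ℕ :=
  (((List.range a.length).flatMap (fun k => [(k, true), (k, false)])).map (faceRep a)).toFinset

lemma card_faceSet (a : KCode) : (faceSet a).card = numFaces a := List.card_toFinset _

lemma mem_faceSet (a : KCode) (d : ℕ × Bool) (hd : d.1 < a.length) :
    faceRep a d ∈ faceSet a := by
  unfold faceSet
  rw [List.mem_toFinset, List.mem_map]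
  refine ⟨d, ?_, rfl⟩
  rw [List.mem_flatMap]
  refine ⟨d.1, List.mem_range.2 hd, ?_⟩
  obtain ⟨k, b⟩ := d
  cases b <;> simp

lemma exists_of_mem_faceSet (a : KCode) (x : ℕ) (hx : x ∈ faceSet a) :
    ∃ d : ℕ × Bool, d.1 < a.length ∧ faceRep a d = x := by
  unfold faceSet at hx
  rw [List.mem_toFinset, List.mem_map] at hx
  obtain ⟨d, hd, rfl⟩ := hx
  rw [List.mem_flatMap] at hd
  obtain ⟨k, hk, hd⟩ := hd
  refine ⟨d, ?_, rfl⟩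
  have : d.1 = k := by
    simp only [List.mem_cons, List.not_mem_nil, or_false] at hd
    rcases hd with rfl | rfl <;> rfl
  rw [this]
  exact List.mem_range.1 hk

open Classical in
/-- The dart function induced by a function on faces. -/
noncomputable def pull (a : KCode) : (faceSet a → ℚ) →ₗ[ℚ] (ℕ × Bool → ℚ) where
  toFun g d := if h : faceRep a d ∈ faceSet a then g ⟨_, h⟩ else 0
  map_add' g g' := by
    funext d
    by_cases h : faceRep a d ∈ faceSet a <;> simp [h]
  map_smul' c g := by
    funext d
    by_cases h : faceRep a d ∈ faceSet a <;> simp [h]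

lemma pull_apply (a : KCode) (g : faceSet a → ℚ) (d : ℕ × Bool) (hd : d.1 < a.length) :
    pull a g d = g ⟨faceRep a d, mem_faceSet a d hd⟩ := by
  have h : pull a g d = if h : faceRep a d ∈ faceSet a then g ⟨_, h⟩ else 0 := rfl
  rw [h, dif_pos (mem_faceSet a d hd)]

lemma pull_inv (a : KCode) (ha : ValidK a) (g : faceSet a → ℚ) : Inv a (pull a g) := by
  intro d hd
  rw [pull_apply a g d hd, pull_apply a g _ (faceNext_lt a ha d hd)]
  congr 2
  exact faceRep_faceNext a ha d hd

/-- The set of over-positions. -/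
def overSet (a : KCode) : Finset ℕ :=
  (Finset.range a.length).filter (fun j => (a.getD j default).isOver = true)

lemma card_overSet (a : KCode) (ha : ValidK a) : (overSet a).card ≤ numCross a := by
  have h : numCross a = (a.map Passage.id).toFinset.card := (List.card_toFinset _).symm
  rw [h]
  apply Finset.card_le_card_of_injOn (fun j => (a.getD j default).id)
  · intro j hj
    simp only [overSet, Finset.coe_filter, Finset.mem_range, Set.mem_ofPred_eq] at hj
    simp only [Finset.mem_coe, List.mem_toFinset, List.mem_map]
    refine ⟨a[j]'hj.1, List.getElem_mem _, ?_⟩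
    exact congrArg Passage.id (List.getD_eq_getElem _ _ hj.1).symm
  · intro j hj k hk h
    simp only [overSet, Finset.coe_filter, Finset.mem_range, Set.mem_ofPred_eq] at hj hk
    exact pos_unique a ha j k hj.1 hk.1 h (hj.2.trans hk.2.symm)

/-- The measurement map: jump variations at the over-passages, one jump and one value. -/
noncomputable def meas (a : KCode) : (faceSet a → ℚ) →ₗ[ℚ] ((overSet a → ℚ) × ℚ × ℚ) where
  toFun g := (fun j => jump (pull a g) (prd a j) - jump (pull a g) j,
    jump (pull a g) 0, pull a g (0, true))
  map_add' g g' := by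
    simp only [map_add, jump, Pi.add_apply, Prod.mk_add_mk, Prod.mk.injEq, and_true]
    refine ⟨?_, by ring⟩
    funext j
    simp only [Pi.add_apply]
    ring
  map_smul' c g := by
    simp only [map_smul, jump, Pi.smul_apply, Prod.smul_mk, Prod.mk.injEq, and_true,
      smul_eq_mul, RingHom.id_apply]
    refine ⟨?_, by ring⟩
    funext j
    simp only [Pi.smul_apply, smul_eq_mul]
    ring

lemma over_jump (a : KCode) (g : faceSet a → ℚ) (v : ℚ × ℚ) (h : meas a g = (0, v)) :
    ∀ j < a.length, (a.getD j default).isOver = true →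
      jump (pull a g) (prd a j) - jump (pull a g) j = 0 := by
  intro j hj ho
  have hm : j ∈ overSet a := by
    simp only [overSet, Finset.mem_filter, Finset.mem_range]
    exact ⟨hj, ho⟩
  exact congrFun (congrArg Prod.fst h) ⟨j, hm⟩

lemma meas_inj (a : KCode) (ha : ValidK a) : Function.Injective (meas a) := by
  rw [← LinearMap.ker_eq_bot, LinearMap.ker_eq_bot']
  intro g hg
  have hinv := pull_inv a ha g
  have h1 := jump_const a ha _ hinv (over_jump a g 0 hg)
  have h2 : jump (pull a g) 0 = 0 := congrArg (fun x => x.2.1) hg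
  have h3 : pull a g (0, true) = 0 := congrArg (fun x => x.2.2) hg
  have h4 := const_of_jump_zero a ha _ hinv (fun j hj => (h1 j hj).trans h2)
  funext x
  obtain ⟨d, hd, hx⟩ := exists_of_mem_faceSet a x x.2
  have h5 := h4 d hd
  rw [h3, pull_apply a g d hd] at h5
  rw [Pi.zero_apply, ← h5]
  congr 1
  exact Subtype.ext hx.symm

/-- The Alexander numbering of a planar code. -/
lemma exists_numbering (a : KCode) (ha : ValidK a) (hcl : numFaces a = numCross a + 2) :
    ∃ f : ℕ × Bool → ℚ, Inv a f ∧ ∀ j < a.length, jump f j = 1 := by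
  have hle := card_overSet a ha
  have hinj := meas_inj a ha
  have d1 : Module.finrank ℚ (faceSet a → ℚ) = numCross a + 2 := by
    rw [Module.finrank_fintype_fun_eq_card, Fintype.card_coe, card_faceSet, hcl]
  have d2 : Module.finrank ℚ ((overSet a → ℚ) × ℚ × ℚ) = (overSet a).card + 2 := by
    simp
  have h3 := LinearMap.finrank_le_finrank_of_injective hinj
  have h4 : Module.finrank ℚ (faceSet a → ℚ) = Module.finrank ℚ ((overSet a → ℚ) × ℚ × ℚ) := by
    omega
  obtain ⟨g, hg⟩ := (LinearMap.injective_iff_surjective_of_finrank_eq_finrank h4).1 hinj (0, 1, 0)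
  refine ⟨pull a g, pull_inv a ha g, ?_⟩
  intro j hj
  rw [jump_const a ha _ (pull_inv a ha g) (over_jump a g _ hg) j hj]
  exact congrArg (fun x => x.2.1) hg

lemma label_step (a : KCode) (ha : ValidK a) (f : ℕ × Bool → ℚ) (hf : Inv a f)
    (h1 : ∀ j < a.length, jump f j = 1) (j : ℕ) (hj : j < a.length) :
    f (j, false) = f (prd a j, false) + ((a.getD j default).inc : ℤ) := by
  rw [inc_kap a ha j hj]
  have key : ∀ j, j < a.length → kap a j = true → f (j, false) = f (prd a j, false) - 1 ∧
      f (partnerIdx a j, false) = f (prd a (partnerIdx a j), false) + 1 := by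
    intro j hj hk
    obtain ⟨e1, e2, e3, e4⟩ := inv_local a ha f hf j hj hk
    have hj' := (partner_spec a ha j hj).1
    have i1 := h1 j hj
    have i2 := h1 _ hj'
    have i3 := h1 (prd a j) (pred_lt _ _ hj)
    have i4 := h1 (prd a (partnerIdx a j)) (pred_lt _ _ hj')
    unfold jump at i1 i2 i3 i4
    constructor <;> linarith
  cases hk : kap a j
  · have h := (key (partnerIdx a j) (partner_spec a ha j hj).1 (by
      rw [kap_partner a ha j hj, hk]; rfl)).2
    rw [partner_partner a ha j hj] at h
    simp [h]
  · simp [(key j hj hk).1, sub_eq_add_neg]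

lemma labelAt_eq (a : KCode) (ha : ValidK a) (f : ℕ × Bool → ℚ) (hf : Inv a f)
    (h1 : ∀ j < a.length, jump f j = 1) (k : ℕ) (hk : k < a.length) :
    ((labelAt a k : ℤ) : ℚ) = f (prd a k, false) - f (prd a 0, false) := by
  induction k with
  | zero => simp [labelAt]
  | succ k ih =>
    have hk' : k < a.length := by omega
    have e1 : labelAt a (k + 1) = labelAt a k + (a.getD k default).inc := by
      unfold labelAt
      rw [List.take_add_one, List.getElem?_eq_getElem hk', List.getD_eq_getElem _ _ hk',
        List.map_append, List.sum_append]
      simp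
    have e2 : prd a (k + 1) = k := by
      unfold prd
      rw [show k + 1 + a.length - 1 = k + a.length by omega, Nat.add_mod_right,
        Nat.mod_eq_of_lt (by omega)]
    rw [e1, e2, label_step a ha f hf h1 k hk']
    push_cast
    rw [ih hk']
    ring

lemma findIdx_pos (a : KCode) (ha : ValidK a) (k : ℕ) (hk : k < a.length) (b : Bool)
    (p : Passage → Bool)
    (hp : ∀ q, p q = true ↔ q.id = (a.getD k default).id ∧ q.isOver = b) :
    a.findIdx p < a.length ∧ (a.getD (a.findIdx p) default).id = (a.getD k default).id ∧
      (a.getD (a.findIdx p) default).isOver = b := by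
  obtain ⟨j, hj, h1, h2⟩ := exists_pos a ha k hk b
  have hlt : a.findIdx p < a.length := by
    apply List.findIdx_lt_length_of_exists
    refine ⟨a[j], List.getElem_mem hj, ?_⟩
    rw [List.getD_eq_getElem _ _ hj] at h1 h2
    exact (hp _).2 ⟨h1, h2⟩
  refine ⟨hlt, ?_⟩
  rw [List.getD_eq_getElem _ _ hlt]
  exact (hp _).1 (List.findIdx_getElem (w := hlt))

lemma sgn_eq (a : KCode) (ha : ValidK a) (k : ℕ) (hk : k < a.length) :
    sgn a (a.getD k default).id = (a.getD k default).sign := by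
  have hk2 := List.getD_eq_getElem a default hk
  rw [hk2]
  unfold sgn
  cases h : a.find? (fun p => p.id == a[k].id) with
  | none =>
    have := List.find?_eq_none.1 h a[k] (List.getElem_mem hk)
    simp at this
  | some q =>
    have h1 := List.mem_of_find?_eq_some h
    have h2 := List.find?_some h
    exact (ha a[k] (List.getElem_mem hk)).2.2.2 q h1 (by simpa using h2)

lemma wt_zero (a : KCode) (ha : ValidK a) (hcl : numFaces a = numCross a + 2) (i : ℕ)
    (hi : i ∈ crossIds a) : wt a i = 0 := by
  obtain ⟨f, hf, h1⟩ := exists_numbering a ha hcl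
  have : ∃ k < a.length, (a.getD k default).id = i := by
    unfold crossIds at hi
    rw [List.mem_dedup, List.mem_map] at hi
    obtain ⟨p, hp, rfl⟩ := hi
    obtain ⟨k, hk, rfl⟩ := List.mem_iff_getElem.1 hp
    exact ⟨k, hk, by rw [List.getD_eq_getElem _ _ hk]⟩
  obtain ⟨k, hk, rfl⟩ := this
  have ho := findIdx_pos a ha k hk true
    (fun p => p.id == (a.getD k default).id && p.isOver) (by intro q; simp)
  have hu := findIdx_pos a ha k hk false
    (fun p => p.id == (a.getD k default).id && !p.isOver) (by intro q; simp)
  change overPos a (a.getD k default).id < _ ∧ (a.getD (overPos a (a.getD k default).id) _).id = _ ∧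
    (a.getD (overPos a (a.getD k default).id) _).isOver = _ at ho
  change underPos a (a.getD k default).id < _ ∧
    (a.getD (underPos a (a.getD k default).id) _).id = _ ∧
    (a.getD (underPos a (a.getD k default).id) _).isOver = _ at hu
  have hsg := sgn_eq a ha k hk
  unfold wt
  rw [hsg]
  generalize overPos a (a.getD k default).id = o at *
  generalize underPos a (a.getD k default).id = u at *
  obtain ⟨o1, o2, o3⟩ := ho
  obtain ⟨u1, u2, u3⟩ := hu
  obtain ⟨p1, p2, p3⟩ := partner_spec a ha o o1
  have hpo : partnerIdx a o = u := by
    apply pos_unique a ha _ _ p1 u1 (p2.trans (o2.trans u2.symm))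
    rw [p3, o3, u3]
    rfl
  have hpu : partnerIdx a u = o := by rw [← hpo, partner_partner a ha o o1]
  have so := sign_eq a ha o k o1 hk o2
  have su := sign_eq a ha u k u1 hk u2
  have lo := labelAt_eq a ha f hf h1 o o1
  have lu := labelAt_eq a ha f hf h1 u u1
  have so2 := label_step a ha f hf h1 o o1
  have tu := label_step a ha f hf h1 u u1
  unfold Passage.inc at so2 tu
  rw [o3, so] at so2
  rw [u3, su] at tu
  have goal : ((labelAt a o - labelAt a u - (a.getD k default).sign : ℤ) : ℚ) = 0 := by
    push_cast
    rw [lo, lu]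
    rcases sign_pm a ha k hk with hs | hs
    · have hko : kap a o = true := by
        unfold kap
        rw [o3, so, hs]
        rfl
      obtain ⟨e1, e2, e3, e4⟩ := inv_local a ha f hf o o1 hko
      rw [hpo] at e1 e2 e3 e4
      rw [hs] at so2 tu ⊢
      simp at so2 tu ⊢
      linarith
    · have hku : kap a u = true := by
        unfold kap
        rw [u3, su, hs]
        rfl
      obtain ⟨e1, e2, e3, e4⟩ := inv_local a ha f hf u u1 hku
      rw [hpu] at e1 e2 e3 e4
      rw [hs] at so2 tu ⊢
      simp at so2 tu ⊢
      linarith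
  exact_mod_cast goal

end ClassicalWeights

/-- If `K` is a classical knot diagram (a virtual knot
diagram with no virtual crossings, i.e. with planar Gauss code), then every
classical crossing `c` of `K` has weight `W(c) = 0`, and consequently
`P_K(t) = 0`. -/
theorem classical_weights_zero (a : KCode) (ha : ValidK a) (hcl : IsClassical a) :
    (∀ i ∈ crossIds a, wt a i = 0) ∧ affP a = 0 := by
  have hw : ∀ i ∈ crossIds a, wt a i = 0 := by
    rcases hcl with h | h
    · subst h
      intro i hi
      simp [crossIds] at hi
    · exact fun i hi => ClassicalWeights.wt_zero a ha h i hi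
  refine ⟨hw, ?_⟩
  unfold affP
  apply List.sum_eq_zero
  intro x hx
  obtain ⟨i, hi, rfl⟩ := List.mem_map.1 hx
  rw [hw i hi, T_zero, sub_self, mul_zero]
end

section
/- For any virtual knot diagram K, the odd writhe satisfies J(K*) = -J(K), where K* is the mirror image of K; consequently, if J(K) is nonzero then K is not equivalent to any classical knot and K is not equivalent to its mirror image (K is chiral). -/
/-!
# Virtual knots and links via signed Gauss codes

A virtual knot or link diagram, up to the virtual Reidemeister moves and the
detour move, is faithfully encoded by its signed oriented Gauss code: the
cyclic sequence, along each component, of passages through the classical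
crossings, each passage recording the crossing's name, whether the strand
passes over or under, and the crossing sign.  Virtual crossings and the
detour move are invisible in this encoding, so oriented virtual isotopy is
generated by the oriented classical Reidemeister moves together with
re-encoding moves (rotation of the base point, permutation of the components,
renaming of the crossings).
-/

open LaurentPolynomial

/-! ## Basic facts about valid codes -/

/-- The `k`-th passage of a code. -/
def pas (a : KCode) (k : ℕ) : Passage := a.getD k default

theorem pas_eq (a : KCode) (k : ℕ) (hk : k < a.length) : pas a k = a[k] := by
  simp [pas, hk]

theorem pas_mem (a : KCode) (k : ℕ) (hk : k < a.length) : pas a k ∈ a := by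
  rw [pas_eq a k hk]; exact List.getElem_mem hk

theorem exists_pas {a : KCode} {p : Passage} (hp : p ∈ a) : ∃ k < a.length, pas a k = p := by
  obtain ⟨k, hk, h⟩ := List.getElem_of_mem hp
  exact ⟨k, hk, by rw [pas_eq a k hk, h]⟩

theorem valid_nodup {a : KCode} (ha : ValidK a) : a.Nodup := by
  rw [List.nodup_iff_count_le_one]
  intro p
  by_cases hp : p ∈ a
  · obtain ⟨-, h1, h2, -⟩ := ha p hp
    rw [← List.countP_eq_length_filter] at h1 h2
    cases ho : p.isOver
    · rw [← h2, List.count]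
      apply List.countP_mono_left
      intro q _ hq
      simp at hq
      simp [hq, ho]
    · rw [← h1, List.count]
      apply List.countP_mono_left
      intro q _ hq
      simp at hq
      simp [hq, ho]
  · rw [List.count_eq_zero_of_not_mem hp]; omega

theorem pas_uniq {a : KCode} (ha : ValidK a) {i j : ℕ} (hi : i < a.length) (hj : j < a.length)
    (hid : (pas a i).id = (pas a j).id) (ho : (pas a i).isOver = (pas a j).isOver) : i = j := by
  have hs := (ha _ (pas_mem a j hj)).2.2.2 _ (pas_mem a i hi) hid
  have h : pas a i = pas a j := by
    cases hpi : pas a i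
    cases hpj : pas a j
    simp_all
  rw [pas_eq a i hi, pas_eq a j hj] at h
  exact (List.Nodup.getElem_inj_iff (valid_nodup ha)).1 h

theorem pas_exists {a : KCode} (ha : ValidK a) {p : Passage} (hp : p ∈ a) (o : Bool) :
    ∃ j < a.length, (pas a j).id = p.id ∧ (pas a j).isOver = o := by
  obtain ⟨-, h1, h2, -⟩ := ha p hp
  cases o
  · obtain ⟨q, hq⟩ := List.exists_mem_of_length_pos (h2 ▸ Nat.one_pos)
    simp at hq
    obtain ⟨j, hj, rfl⟩ := exists_pas hq.1
    exact ⟨j, hj, hq.2⟩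
  · obtain ⟨q, hq⟩ := List.exists_mem_of_length_pos (h1 ▸ Nat.one_pos)
    simp at hq
    obtain ⟨j, hj, rfl⟩ := exists_pas hq.1
    exact ⟨j, hj, hq.2⟩

theorem partner_spec0 {a : KCode} (ha : ValidK a) {k : ℕ} (hk : k < a.length) :
    partnerIdx a k < a.length ∧ partnerIdx a k ≠ k ∧
      (pas a (partnerIdx a k)).id = (pas a k).id := by
  obtain ⟨j, hj, hid, ho⟩ := pas_exists ha (pas_mem a k hk) (!(pas a k).isOver)
  have hjk : j ≠ k := by
    rintro rfl
    simp at ho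
  have hm : partnerIdx a k ∈ (List.range a.length).filter
      (fun j => j != k && (a.getD j default).id == (a.getD k default).id) := by
    have hjm : j ∈ (List.range a.length).filter
      (fun j => j != k && (a.getD j default).id == (a.getD k default).id) := by
      simp only [List.mem_filter, List.mem_range]
      refine ⟨hj, ?_⟩
      simp only [pas] at hid
      rw [hid]
      simp [hjk]
    unfold partnerIdx
    generalize (List.range a.length).filter
      (fun j => j != k && (a.getD j default).id == (a.getD k default).id) = l at hjm ⊢
    cases l with
    | nil => simp at hjm
    | cons x l => simp
  simp only [List.mem_filter, List.mem_range] at hm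
  refine ⟨hm.1, ?_⟩
  have := hm.2
  simp only [Bool.and_eq_true, bne_iff_ne, beq_iff_eq] at this
  exact this

theorem partner_over {a : KCode} (ha : ValidK a) {k : ℕ} (hk : k < a.length) :
    (pas a (partnerIdx a k)).isOver = !(pas a k).isOver := by
  obtain ⟨h1, h2, h3⟩ := partner_spec0 ha hk
  by_contra h
  apply h2
  apply pas_uniq ha h1 hk h3
  revert h
  cases (pas a (partnerIdx a k)).isOver <;> cases (pas a k).isOver <;> simp

theorem partner_sign {a : KCode} (ha : ValidK a) {k : ℕ} (hk : k < a.length) :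
    (pas a (partnerIdx a k)).sign = (pas a k).sign := by
  obtain ⟨h1, h2, h3⟩ := partner_spec0 ha hk
  exact (ha _ (pas_mem a k hk)).2.2.2 _ (pas_mem a _ h1) h3

theorem partner_eq {a : KCode} (ha : ValidK a) {k j : ℕ} (hk : k < a.length) (hj : j < a.length)
    (hid : (pas a j).id = (pas a k).id) (hjk : j ≠ k) : partnerIdx a k = j := by
  obtain ⟨h1, h2, h3⟩ := partner_spec0 ha hk
  apply pas_uniq ha h1 hj (h3.trans hid.symm)
  rw [partner_over ha hk]
  by_contra h
  apply hjk
  apply pas_uniq ha hj hk hid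
  revert h
  cases (pas a j).isOver <;> cases (pas a k).isOver <;> simp

theorem partner_invol {a : KCode} (ha : ValidK a) {k : ℕ} (hk : k < a.length) :
    partnerIdx a (partnerIdx a k) = k := by
  obtain ⟨h1, h2, h3⟩ := partner_spec0 ha hk
  exact partner_eq ha h1 hk h3.symm h2.symm

theorem valid_even {a : KCode} (ha : ValidK a) : Even a.length := by
  have h : ∑ k ∈ Finset.range a.length, (1 : ZMod 2) = 0 := by
    refine Finset.sum_involution (fun k _ => partnerIdx a k) ?_ ?_ ?_ ?_
    · intros; decide
    · intro k hk _
      exact (partner_spec0 ha (Finset.mem_range.1 hk)).2.1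
    · intro k hk
      exact Finset.mem_range.2 (partner_spec0 ha (Finset.mem_range.1 hk)).1
    · intro k hk
      exact partner_invol ha (Finset.mem_range.1 hk)
  simp at h
  exact (ZMod.natCast_eq_zero_iff_even).1 h

theorem overPos_spec {a : KCode} (ha : ValidK a) {i : ℕ} (hi : i ∈ crossIds a) :
    overPos a i < a.length ∧ (pas a (overPos a i)).id = i ∧
      (pas a (overPos a i)).isOver = true := by
  simp only [crossIds, List.mem_dedup, List.mem_map] at hi
  obtain ⟨p, hp, rfl⟩ := hi
  obtain ⟨j, hj, h1, h2⟩ := pas_exists ha hp true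
  have hlt : overPos a p.id < a.length := by
    apply List.findIdx_lt_length_of_exists
    exact ⟨pas a j, pas_mem a j hj, by simp [h1, h2]⟩
  have := List.findIdx_getElem (w := hlt)
  simp only [Bool.and_eq_true, beq_iff_eq] at this
  refine ⟨hlt, ?_⟩
  rw [pas_eq a _ hlt]
  exact this

theorem underPos_spec {a : KCode} (ha : ValidK a) {i : ℕ} (hi : i ∈ crossIds a) :
    underPos a i < a.length ∧ (pas a (underPos a i)).id = i ∧
      (pas a (underPos a i)).isOver = false := by
  simp only [crossIds, List.mem_dedup, List.mem_map] at hi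
  obtain ⟨p, hp, rfl⟩ := hi
  obtain ⟨j, hj, h1, h2⟩ := pas_exists ha hp false
  have hlt : underPos a p.id < a.length := by
    apply List.findIdx_lt_length_of_exists
    exact ⟨pas a j, pas_mem a j hj, by simp [h1, h2]⟩
  have := List.findIdx_getElem (w := hlt)
  simp only [Bool.and_eq_true, beq_iff_eq, Bool.not_eq_true'] at this
  refine ⟨hlt, ?_⟩
  rw [pas_eq a _ hlt]
  exact this

theorem partner_overPos {a : KCode} (ha : ValidK a) {i : ℕ} (hi : i ∈ crossIds a) :
    partnerIdx a (overPos a i) = underPos a i := by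
  obtain ⟨h1, h2, h3⟩ := overPos_spec ha hi
  obtain ⟨g1, g2, g3⟩ := underPos_spec ha hi
  refine partner_eq ha h1 g1 (by rw [h2, g2]) ?_
  intro h
  rw [h, h3] at g3
  cases g3

theorem sgn_spec {a : KCode} (ha : ValidK a) {k : ℕ} (hk : k < a.length) :
    sgn a (pas a k).id = (pas a k).sign := by
  unfold sgn
  cases h : a.find? (fun p => p.id == (pas a k).id) with
  | none =>
    rw [List.find?_eq_none] at h
    exact absurd (h _ (pas_mem a k hk)) (by simp)
  | some q =>
    have h1 := List.find?_some h
    have h2 := List.mem_of_find?_eq_some h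
    simp at h1
    simpa using (ha _ (pas_mem a k hk)).2.2.2 q h2 h1

theorem id_mem_crossIds {a : KCode} {k : ℕ} (hk : k < a.length) :
    (pas a k).id ∈ crossIds a := by
  simp only [crossIds, List.mem_dedup]
  exact List.mem_map_of_mem (pas_mem a k hk)

/-! ## The mirror image -/

theorem crossIds_switchAll (a : KCode) : crossIds (switchAll a) = crossIds a := by
  simp only [crossIds, switchAll, List.map_map]
  rfl

theorem overPos_switchAll (a : KCode) (i : ℕ) : overPos (switchAll a) i = underPos a i := by
  simp only [overPos, underPos, switchAll, List.findIdx_map]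
  rfl

theorem underPos_switchAll (a : KCode) (i : ℕ) : underPos (switchAll a) i = overPos a i := by
  simp only [overPos, underPos, switchAll, List.findIdx_map]
  congr 1
  funext p
  simp

theorem sgn_switchAll (a : KCode) (i : ℕ) : sgn (switchAll a) i = - sgn a i := by
  simp only [sgn, switchAll, List.find?_map]
  change (Option.map Passage.sign (Option.map _ (a.find? (fun p => p.id == i)))).getD 0 = _
  cases a.find? (fun p => p.id == i) <;> simp

theorem oddWrithe_switchAll (a : KCode) : oddWrithe (switchAll a) = - oddWrithe a := by
  have h : OddCross (switchAll a) = OddCross a := by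
    funext i
    simp only [OddCross, overPos_switchAll, underPos_switchAll, Nat.add_comm]
  have h2 : sgn (switchAll a) = fun i => - sgn a i := funext (sgn_switchAll a)
  unfold oddWrithe
  rw [crossIds_switchAll, h, h2]
  induction (crossIds a).filter (OddCross a) with
  | nil => simp
  | cons x l ih => simp only [List.map_cons, List.sum_cons, ih]; ring

/-! ## Planar codes have only even crossings -/

/-- The cyclic predecessor of a position. -/
def prd (a : KCode) (k : ℕ) : ℕ := (k + a.length - 1) % a.length

/-- The type of a passage: whether the transverse strand crosses it from right to left. -/
def ptyp (a : KCode) (k : ℕ) : Bool := (pas a k).isOver == ((pas a k).sign == 1)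

theorem prd_lt {a : KCode} {k : ℕ} (hk : k < a.length) : prd a k < a.length :=
  Nat.mod_lt _ (by omega)

theorem prd_succ {a : KCode} {k : ℕ} (hk : k < a.length) : (prd a k + 1) % a.length = k := by
  unfold prd
  rcases Nat.eq_zero_or_pos k with rfl | h
  · rw [Nat.mod_eq_of_lt (a := 0 + a.length - 1) (by omega)]
    have : 0 + a.length - 1 + 1 = a.length := by omega
    rw [this, Nat.mod_self]
  · have : k + a.length - 1 = (k - 1) + a.length := by omega
    rw [this, Nat.add_mod_right, Nat.mod_eq_of_lt (a := k - 1) (by omega)]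
    have : k - 1 + 1 = k := by omega
    rw [this, Nat.mod_eq_of_lt hk]

theorem succ_prd {a : KCode} {k : ℕ} (hk : k < a.length) : prd a ((k + 1) % a.length) = k := by
  unfold prd
  rcases Nat.lt_or_ge (k + 1) a.length with h | h
  · rw [Nat.mod_eq_of_lt h]
    have : k + 1 + a.length - 1 = k + a.length := by omega
    rw [this, Nat.add_mod_right, Nat.mod_eq_of_lt hk]
  · have : k + 1 = a.length := by omega
    rw [this, Nat.mod_self, Nat.mod_eq_of_lt (by omega)]
    omega

theorem prd_of_pos {a : KCode} {k : ℕ} (hk : k + 1 < a.length) : prd a (k + 1) = k := by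
  have := succ_prd (a := a) (k := k) (by omega)
  rwa [Nat.mod_eq_of_lt hk] at this

theorem ptyp_partner {a : KCode} (ha : ValidK a) {k : ℕ} (hk : k < a.length) :
    ptyp a (partnerIdx a k) = !ptyp a k := by
  unfold ptyp
  rw [partner_over ha hk, partner_sign ha hk]
  cases (pas a k).isOver <;> cases ((pas a k).sign == 1) <;> rfl

theorem nextEnd_eq (a : KCode) (k : ℕ) (o : Bool) :
    nextEnd a (k, o) = (partnerIdx a k, if ptyp a k then o else !o) := rfl

theorem faceNext_true {a : KCode} {k : ℕ} (hk : k < a.length) :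
    faceNext a (prd a k, true) =
      if ptyp a k then (prd a (partnerIdx a k), false) else (partnerIdx a k, true) := by
  simp only [faceNext, headEnd, if_true, prd_succ hk, nextEnd_eq]
  cases ptyp a k <;> simp [dartFrom, prd]

theorem faceNext_false {a : KCode} (k : ℕ) :
    faceNext a (k, false) =
      if ptyp a k then (partnerIdx a k, true) else (prd a (partnerIdx a k), false) := by
  simp only [faceNext, headEnd]
  cases h : ptyp a k <;> simp [dartFrom, prd, nextEnd_eq, h]

/-- The darts of a code. -/
def dartSet (a : KCode) : Set (ℕ × Bool) := {d | d.1 < a.length}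

theorem faceNext_mapsTo {a : KCode} (ha : ValidK a) :
    Set.MapsTo (faceNext a) (dartSet a) (dartSet a) := by
  rintro ⟨k, o⟩ hk
  simp only [dartSet, Set.mem_ofPred_eq] at hk
  cases o
  · rw [faceNext_false]
    have := (partner_spec0 ha hk).1
    split_ifs
    · exact this
    · exact prd_lt this
  · have hk' : (k + 1) % a.length < a.length := Nat.mod_lt _ (by omega)
    rw [← succ_prd hk, faceNext_true hk']
    have := (partner_spec0 ha hk').1
    split_ifs
    · exact prd_lt this
    · exact this

/-- An explicit inverse of `faceNext`. -/
def facePrev (a : KCode) (d : ℕ × Bool) : ℕ × Bool :=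
  if d.2 then
    (if ptyp a d.1 then (prd a (partnerIdx a d.1), true) else (partnerIdx a d.1, false))
  else
    (if ptyp a ((d.1 + 1) % a.length) then (partnerIdx a ((d.1 + 1) % a.length), false)
      else (prd a (partnerIdx a ((d.1 + 1) % a.length)), true))

theorem facePrev_faceNext {a : KCode} (ha : ValidK a) {d : ℕ × Bool} (hd : d ∈ dartSet a) :
    facePrev a (faceNext a d) = d := by
  obtain ⟨k, o⟩ := d
  have hk : k < a.length := hd
  cases o
  · have h1 := (partner_spec0 ha hk).1
    have h2 := ptyp_partner ha hk
    have h3 := partner_invol ha hk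
    have h4 := prd_succ h1
    rw [faceNext_false]
    cases ht : ptyp a k <;> simp [facePrev, h2, ht, h3, h4]
  · have hk' : (k + 1) % a.length < a.length := Nat.mod_lt _ (by omega)
    have h0 := succ_prd hk
    generalize (k + 1) % a.length = m at hk' h0
    subst h0
    have h1 := (partner_spec0 ha hk').1
    have h2 := ptyp_partner ha hk'
    have h3 := partner_invol ha hk'
    have h4 := prd_succ h1
    rw [faceNext_true hk']
    cases ht : ptyp a m <;> simp [facePrev, h2, ht, h3, h4]

theorem faceNext_injOn {a : KCode} (ha : ValidK a) :
    Set.InjOn (faceNext a) (dartSet a) := by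
  intro d hd e he h
  rw [← facePrev_faceNext ha hd, h, facePrev_faceNext ha he]

theorem faceNext_period {a : KCode} (ha : ValidK a) {d : ℕ × Bool} (hd : d ∈ dartSet a) :
    ∃ m, 1 ≤ m ∧ m ≤ 2 * a.length ∧ (faceNext a)^[m] d = d := by
  have hmaps : ∀ t, (faceNext a)^[t] d ∈ dartSet a := fun t => (faceNext_mapsTo ha).iterate t hd
  obtain ⟨x, hx, y, hy, hxy, hf⟩ := Finset.exists_ne_map_eq_of_card_lt_of_maps_to
    (s := Finset.range (2 * a.length + 1)) (t := Finset.range a.length ×ˢ Finset.univ)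
    (f := fun t => (faceNext a)^[t] d)
    (by simp; omega)
    (by
      intro t _
      simpa [dartSet] using hmaps t)
  have key : ∀ x y, x < y → (faceNext a)^[x] d = (faceNext a)^[y] d →
      (faceNext a)^[y - x] d = d := by
    intro x y hlt h
    have : y = x + (y - x) := by omega
    rw [this, Function.iterate_add_apply] at h
    exact ((faceNext_injOn ha).iterate (faceNext_mapsTo ha) x hd (hmaps _) h).symm
  simp only [Finset.mem_range] at hx hy
  rcases Nat.lt_or_gt_of_ne hxy with h | h
  · exact ⟨y - x, by omega, by omega, key x y h hf⟩
  · exact ⟨x - y, by omega, by omega, key y x h hf.symm⟩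

theorem foldr_min_le (l : List ℕ) (z x : ℕ) (hx : x ∈ z :: l) : l.foldr min z ≤ x := by
  induction l with
  | nil => simp at hx; simp [hx]
  | cons y l ih =>
    simp only [List.foldr_cons]
    simp only [List.mem_cons] at hx ih
    rcases hx with h | h | h
    · exact (min_le_right _ _).trans (ih (Or.inl h))
    · exact (min_le_left _ _).trans h.ge
    · exact (min_le_right _ _).trans (ih (Or.inr h))

theorem foldr_min_mem (l : List ℕ) (z : ℕ) : l.foldr min z ∈ z :: l := by
  induction l with
  | nil => simp
  | cons y l ih =>
    simp only [List.foldr_cons]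
    simp only [List.mem_cons] at ih ⊢
    rcases min_choice y (l.foldr min z) with h | h <;> rw [h]
    · tauto
    · tauto

theorem faceRep_le {a : KCode} (ha : ValidK a) {d : ℕ × Bool} (hd : d ∈ dartSet a) (t : ℕ) :
    faceRep a d ≤ encDart ((faceNext a)^[t] d) := by
  obtain ⟨m, h1, h2, h3⟩ := faceNext_period ha hd
  apply foldr_min_le
  rw [List.mem_cons, List.mem_map]
  right
  refine ⟨t % m, ?_, ?_⟩
  · rw [List.mem_range]
    exact (Nat.mod_lt _ h1).trans_le h2
  · have h4 : Function.IsPeriodicPt (faceNext a) m d := h3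
    rw [h4.iterate_mod_apply]

theorem faceRep_mem {a : KCode} (d : ℕ × Bool) :
    ∃ t, faceRep a d = encDart ((faceNext a)^[t] d) := by
  have := foldr_min_mem ((List.range (2 * a.length)).map
    (fun t => encDart ((faceNext a)^[t] d))) (encDart d)
  rw [List.mem_cons, List.mem_map] at this
  rcases this with h | ⟨t, _, h⟩
  · exact ⟨0, h⟩
  · exact ⟨t, h.symm⟩

theorem faceRep_faceNext {a : KCode} (ha : ValidK a) {d : ℕ × Bool} (hd : d ∈ dartSet a) :
    faceRep a (faceNext a d) = faceRep a d := by
  apply le_antisymm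
  · obtain ⟨t, ht⟩ := faceRep_mem (a := a) d
    obtain ⟨m, h1, h2, h3⟩ := faceNext_period ha hd
    have : (faceNext a)^[t] d = (faceNext a)^[t + m - 1] (faceNext a d) := by
      rw [← Function.iterate_succ_apply]
      have : (t + m - 1).succ = t + m := by omega
      rw [this, Function.iterate_add_apply, h3]
    rw [ht, this]
    exact faceRep_le ha (faceNext_mapsTo ha hd) _
  · obtain ⟨t, ht⟩ := faceRep_mem (a := a) (faceNext a d)
    rw [ht, ← Function.iterate_succ_apply]
    exact faceRep_le ha hd _

/-- The list of face representatives. -/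
def faceList (a : KCode) : List ℕ :=
  (((List.range a.length).flatMap (fun k => [(k, true), (k, false)])).map (faceRep a)).dedup

theorem mem_faceList {a : KCode} {d : ℕ × Bool} (hd : d ∈ dartSet a) :
    faceRep a d ∈ faceList a := by
  obtain ⟨k, o⟩ := d
  have hk : k < a.length := hd
  simp only [faceList, List.mem_dedup, List.mem_map, List.mem_flatMap, List.mem_range]
  refine ⟨(k, o), ⟨k, hk, ?_⟩, rfl⟩
  cases o <;> simp

theorem exists_of_mem_faceList {a : KCode} {r : ℕ} (hr : r ∈ faceList a) :
    ∃ d ∈ dartSet a, faceRep a d = r := by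
  simp only [faceList, List.mem_dedup, List.mem_map, List.mem_flatMap, List.mem_range] at hr
  obtain ⟨d, ⟨k, hk, h⟩, rfl⟩ := hr
  refine ⟨d, ?_, rfl⟩
  simp at h
  rcases h with rfl | rfl <;> exact hk

/-- A mod 2 function on the darts that is constant on the faces. -/
def FaceFun (a : KCode) (g : ℕ × Bool → ZMod 2) : Prop :=
  ∀ d ∈ dartSet a, g (faceNext a d) = g d

/-- The difference of the two sides of an arc. -/
def sideDiff (g : ℕ × Bool → ZMod 2) (k : ℕ) : ZMod 2 := g (k, false) + g (k, true)

theorem faceFun_true {a : KCode} {g : ℕ × Bool → ZMod 2} (hg : FaceFun a g)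
    {k : ℕ} (hk : k < a.length) :
    g (prd a k, true) =
      if ptyp a k then g (prd a (partnerIdx a k), false) else g (partnerIdx a k, true) := by
  have := hg (prd a k, true) (prd_lt hk)
  rw [faceNext_true hk] at this
  rw [← this]
  split_ifs <;> rfl

theorem faceFun_false {a : KCode} {g : ℕ × Bool → ZMod 2} (hg : FaceFun a g)
    {k : ℕ} (hk : k < a.length) :
    g (k, false) =
      if ptyp a k then g (partnerIdx a k, true) else g (prd a (partnerIdx a k), false) := by
  have := hg (k, false) hk
  rw [faceNext_false] at this
  rw [← this]
  split_ifs <;> rfl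

theorem zmod2_add_self (x : ZMod 2) : x + x = 0 := CharTwo.add_self_eq_zero x

theorem kirchhoff {a : KCode} (ha : ValidK a) {g : ℕ × Bool → ZMod 2} (hg : FaceFun a g)
    {k : ℕ} (hk : k < a.length) :
    sideDiff g (partnerIdx a k) + sideDiff g (prd a (partnerIdx a k)) =
      sideDiff g k + sideDiff g (prd a k) := by
  have h1 := (partner_spec0 ha hk).1
  have h2 := ptyp_partner ha hk
  have h3 := partner_invol ha hk
  have e1 := faceFun_true hg hk
  have e2 := faceFun_false hg hk
  have e3 := faceFun_true hg h1
  have e4 := faceFun_false hg h1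
  rw [h2, h3] at e3 e4
  unfold sideDiff
  cases ht : ptyp a k <;> simp [ht] at e1 e2 e3 e4 <;> rw [e1, e2, e3, e4] <;> ring

theorem left_step {a : KCode} (ha : ValidK a) {g : ℕ × Bool → ZMod 2} (hg : FaceFun a g)
    {k : ℕ} (hk : k < a.length) :
    g (k, false) = g (prd a k, false) +
      (if ptyp a k then sideDiff g (partnerIdx a k) else sideDiff g (prd a (partnerIdx a k))) := by
  have h1 := (partner_spec0 ha hk).1
  have h2 := ptyp_partner ha hk
  have h3 := partner_invol ha hk
  have e1 := faceFun_true hg hk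
  have e2 := faceFun_false hg hk
  have e3 := faceFun_true hg h1
  have e4 := faceFun_false hg h1
  rw [h2, h3] at e3 e4
  unfold sideDiff
  cases ht : ptyp a k <;> simp [ht] at e1 e2 e3 e4 ⊢
  · rw [e2, e3, add_comm, add_assoc, zmod2_add_self, add_zero]
  · rw [e2, e4, ← add_assoc, zmod2_add_self, zero_add]

theorem faceFun_ext {a : KCode} (ha : ValidK a) {g h : ℕ × Bool → ZMod 2} (hg : FaceFun a g)
    (hh : FaceFun a h) (h0 : g (0, false) = h (0, false)) (hD : sideDiff g 0 = sideDiff h 0)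
    (hj : ∀ i ∈ crossIds a, sideDiff g (overPos a i) + sideDiff g (prd a (overPos a i)) =
      sideDiff h (overPos a i) + sideDiff h (prd a (overPos a i))) :
    ∀ d ∈ dartSet a, g d = h d := by
  have hj' : ∀ k < a.length, sideDiff g k + sideDiff g (prd a k) =
      sideDiff h k + sideDiff h (prd a k) := by
    intro k hk
    have hi := id_mem_crossIds hk
    obtain ⟨h1, h2, h3⟩ := overPos_spec ha hi
    by_cases he : overPos a (pas a k).id = k
    · have := hj _ hi
      rwa [he] at this
    · have hp := partner_eq ha hk h1 h2 he
      rw [← kirchhoff ha hg hk, ← kirchhoff ha hh hk, hp]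
      exact hj _ hi
  have hDk : ∀ k < a.length, sideDiff g k = sideDiff h k := by
    intro k
    induction k with
    | zero => intro _; exact hD
    | succ k ih =>
      intro hk
      have := hj' (k + 1) hk
      rw [prd_of_pos hk, ih (by omega)] at this
      exact add_right_cancel this
  have hL : ∀ k < a.length, g (k, false) = h (k, false) := by
    intro k
    induction k with
    | zero => intro _; exact h0
    | succ k ih =>
      intro hk
      have hp := (partner_spec0 ha hk).1
      rw [left_step ha hg hk, left_step ha hh hk, prd_of_pos hk, ih (by omega),
        hDk _ hp, hDk _ (prd_lt hp)]
  rintro ⟨k, o⟩ hk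
  cases o
  · exact hL k hk
  · have := hDk k hk
    unfold sideDiff at this
    rw [hL k hk] at this
    exact add_left_cancel this

/-- On a planar diagram, the jumps of a face function can be prescribed. -/
theorem exists_faceFun {a : KCode} (ha : ValidK a) (hpl : numFaces a = numCross a + 2)
    (D0 : ZMod 2) (j : ℕ → ZMod 2) :
    ∃ g, FaceFun a g ∧ sideDiff g 0 = D0 ∧
      ∀ k < a.length, sideDiff g k + sideDiff g (prd a k) = j (pas a k).id := by
  classical
  let ext : ({r // r ∈ (faceList a).toFinset} → ZMod 2) → ℕ × Bool → ZMod 2 := fun h d =>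
    if hd : faceRep a d ∈ (faceList a).toFinset then h ⟨faceRep a d, hd⟩ else 0
  have hext : ∀ h, FaceFun a (ext h) := by
    intro h d hd
    simp only [ext, faceRep_faceNext ha hd]
  let Ψ : ({r // r ∈ (faceList a).toFinset} → ZMod 2) →
      ZMod 2 × ZMod 2 × ({i // i ∈ (crossIds a).toFinset} → ZMod 2) := fun h =>
    (ext h (0, false), sideDiff (ext h) 0, fun i =>
      sideDiff (ext h) (overPos a i.1) + sideDiff (ext h) (prd a (overPos a i.1)))
  have hinj : Function.Injective Ψ := by
    intro h h' he
    simp only [Ψ, Prod.mk.injEq] at he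
    obtain ⟨e1, e2, e3⟩ := he
    have hall := faceFun_ext ha (hext h) (hext h') e1 e2 (by
      intro i hi
      exact congrFun e3 ⟨i, List.mem_toFinset.2 hi⟩)
    funext ⟨r, hr⟩
    obtain ⟨d, hd, rfl⟩ := exists_of_mem_faceList (List.mem_toFinset.1 hr)
    have := hall d hd
    simp only [ext] at this
    rwa [dif_pos hr, dif_pos hr] at this
  have hcard : Fintype.card ({r // r ∈ (faceList a).toFinset} → ZMod 2) =
      Fintype.card (ZMod 2 × ZMod 2 × ({i // i ∈ (crossIds a).toFinset} → ZMod 2)) := by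
    have c1 : (faceList a).toFinset.card = numFaces a :=
      List.toFinset_card_of_nodup (List.nodup_dedup _)
    have c2 : (crossIds a).toFinset.card = numCross a :=
      List.toFinset_card_of_nodup (List.nodup_dedup _)
    rw [Fintype.card_prod, Fintype.card_prod, Fintype.card_fun, Fintype.card_fun,
      Fintype.card_coe, Fintype.card_coe, c1, c2, hpl, ZMod.card]
    ring
  have hbij := (Fintype.bijective_iff_injective_and_card Ψ).2 ⟨hinj, hcard⟩
  obtain ⟨h, hh⟩ := hbij.2 (0, D0, fun i => j i.1)
  simp only [Ψ, Prod.mk.injEq] at hh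
  obtain ⟨-, e2, e3⟩ := hh
  refine ⟨ext h, hext h, e2, ?_⟩
  intro k hk
  have hi := id_mem_crossIds hk
  obtain ⟨h1, h2, h3⟩ := overPos_spec ha hi
  have e4 := congrFun e3 ⟨_, List.mem_toFinset.2 hi⟩
  simp only at e4
  by_cases he : overPos a (pas a k).id = k
  · rwa [he] at e4
  · have hp := partner_eq ha hk h1 h2 he
    rw [← kirchhoff ha (hext h) hk, hp]
    exact e4

theorem planar_even {a : KCode} (ha : ValidK a) (hpl : numFaces a = numCross a + 2)
    {p q : ℕ} (hpq : p < q) (hq : q < a.length) (hpp : partnerIdx a p = q) :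
    (p + q) % 2 = 1 := by
  have hp : p < a.length := by omega
  have hqp : partnerIdx a q = p := by rw [← hpp, partner_invol ha hp]
  have hidq : (pas a q).id = (pas a p).id := by
    rw [← hpp]; exact (partner_spec0 ha hp).2.2
  obtain ⟨g, hg, hD0, hj⟩ := exists_faceFun ha hpl (if p = 0 then 0 else 1)
    (fun i => if i = (pas a p).id then 1 else 0)
  have hother : ∀ k < a.length, k ≠ p → k ≠ q → (pas a k).id ≠ (pas a p).id := by
    intro k hk h1 h2 h3
    exact h2 ((partner_eq ha hp hk h3 h1).symm.trans hpp)
  -- the values of the jump function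
  have hD : ∀ k < a.length, sideDiff g k = if p ≤ k ∧ k < q then 0 else 1 := by
    intro k
    induction k with
    | zero =>
      intro _
      rw [hD0]
      by_cases h : p = 0
      · rw [if_pos h, if_pos (by omega)]
      · rw [if_neg h, if_neg (by omega)]
    | succ k ih =>
      intro hk
      have h1 := hj (k + 1) hk
      rw [prd_of_pos hk, ih (by omega)] at h1
      have h2 : sideDiff g (k + 1) = (if (pas a (k + 1)).id = (pas a p).id then 1 else 0) +
          (if p ≤ k ∧ k < q then 0 else 1) := by
        rw [← h1, add_assoc, zmod2_add_self, add_zero]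
      rw [h2]
      by_cases e1 : k + 1 = p
      · rw [e1, if_pos rfl, if_neg (by omega), if_pos (by omega)]; decide
      · by_cases e2 : k + 1 = q
        · rw [e2, if_pos hidq, if_pos (by omega), if_neg (by omega)]; decide
        · rw [if_neg (hother _ hk e1 e2), zero_add]
          by_cases e3 : p ≤ k ∧ k < q
          · rw [if_pos e3, if_pos (by omega)]
          · rw [if_neg e3, if_neg (by omega)]
  have hstep : ∀ k < a.length, p < k → k < q →
      g (k, false) = g (k - 1, false) +
        (if p < partnerIdx a k ∧ partnerIdx a k < q then 0 else 1) := by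
    intro k hk h1 h2
    have hs := left_step ha hg hk
    have hk' := (partner_spec0 ha hk).1
    have hprd : prd a k = k - 1 := by
      have := prd_of_pos (a := a) (k := k - 1) (by omega)
      rwa [Nat.sub_add_cancel (by omega)] at this
    have hn1 : partnerIdx a k ≠ p := by
      intro h
      have := partner_invol ha hk
      rw [h, hpp] at this
      omega
    have hn2 : partnerIdx a k ≠ q := by
      intro h
      have := partner_invol ha hk
      rw [h, hqp] at this
      omega
    have hjp := hj _ hk'
    simp only [if_neg (hother _ hk' hn1 hn2)] at hjp
    have heq : sideDiff g (prd a (partnerIdx a k)) = sideDiff g (partnerIdx a k) := by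
      have := congrArg (sideDiff g (partnerIdx a k) + ·) hjp
      simpa [← add_assoc, zmod2_add_self] using this
    rw [heq, ite_self, hD _ hk', hprd] at hs
    rw [hs]
    congr 1
    by_cases e3 : p ≤ partnerIdx a k ∧ partnerIdx a k < q
    · rw [if_pos e3, if_pos (by omega)]
    · rw [if_neg e3, if_neg (by omega)]
  have hsum : ∀ m, p + m < q → g (p + m, false) = g (p, false) +
      ∑ k ∈ Finset.Ioc p (p + m), (if p < partnerIdx a k ∧ partnerIdx a k < q then 0 else 1) := by
    intro m
    induction m with
    | zero => simp
    | succ m ih =>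
      intro hm
      have h1 := hstep (p + (m + 1)) (by omega) (by omega) hm
      have h2 : p + (m + 1) - 1 = p + m := by omega
      rw [h2, ih (by omega)] at h1
      rw [h1, ← add_assoc p m 1, Finset.sum_Ioc_succ_top (by omega), add_assoc]
  have hinv : ∑ k ∈ Finset.Ioc p (q - 1),
      (if p < partnerIdx a k ∧ partnerIdx a k < q then (1 : ZMod 2) else 0) = 0 := by
    rw [← Finset.sum_filter]
    refine Finset.sum_involution (fun k _ => partnerIdx a k) ?_ ?_ ?_ ?_
    · intros; decide
    · intro k hk _
      simp only [Finset.mem_filter, Finset.mem_Ioc] at hk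
      exact (partner_spec0 ha (by omega)).2.1
    · intro k hk
      simp only [Finset.mem_filter, Finset.mem_Ioc] at hk ⊢
      rw [partner_invol ha (by omega)]
      omega
    · intro k hk
      simp only [Finset.mem_filter, Finset.mem_Ioc] at hk
      exact partner_invol ha (by omega)
  have hend : g (q - 1, false) = g (p, false) := by
    have hprd : prd a q = q - 1 := by
      have := prd_of_pos (a := a) (k := q - 1) (by omega)
      rwa [Nat.sub_add_cancel (by omega)] at this
    have d1 := hD p hp
    have d2 := hD (q - 1) (by omega)
    rw [if_pos (by omega)] at d1 d2
    have e1 := faceFun_true hg hq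
    have e2 := faceFun_false hg hp
    have ht := ptyp_partner ha hp
    rw [hpp] at ht e2
    rw [hqp] at e1
    unfold sideDiff at d1 d2
    rw [CharTwo.add_eq_zero] at d1 d2
    rw [hprd] at e1 e2
    cases h : ptyp a p
    · simp [h] at e2
      exact e2.symm
    · simp [h] at ht
      simp [ht] at e1
      rw [d1, d2, e1]
  have h1 := hsum (q - 1 - p) (by omega)
  have h2 : p + (q - 1 - p) = q - 1 := by omega
  rw [h2, hend] at h1
  have h3 : ∑ k ∈ Finset.Ioc p (q - 1),
      (if p < partnerIdx a k ∧ partnerIdx a k < q then (0 : ZMod 2) else 1) = 0 := by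
    simpa using h1
  have h4 : ∑ k ∈ Finset.Ioc p (q - 1), (1 : ZMod 2) = 0 := by
    have h5 := congrArg₂ (· + ·) h3 hinv
    simp only [add_zero] at h5
    rw [← h5, ← Finset.sum_add_distrib]
    apply Finset.sum_congr rfl
    intro k _
    split_ifs <;> simp
  simp only [Finset.sum_const, Nat.card_Ioc, nsmul_eq_mul, mul_one] at h4
  rw [ZMod.natCast_eq_zero_iff_even] at h4
  obtain ⟨r, hr⟩ := h4
  omega

theorem oddWrithe_classical {a : KCode} (ha : ValidK a) (hc : IsClassical a) :
    oddWrithe a = 0 := by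
  rcases hc with rfl | hpl
  · rfl
  · have : (crossIds a).filter (OddCross a) = [] := by
      rw [List.filter_eq_nil_iff]
      intro i hi
      obtain ⟨h1, h2, h3⟩ := overPos_spec ha hi
      obtain ⟨g1, g2, g3⟩ := underPos_spec ha hi
      have hp := partner_overPos ha hi
      have hne : underPos a i ≠ overPos a i := hp ▸ (partner_spec0 ha h1).2.1
      have hodd : (overPos a i + underPos a i) % 2 = 1 := by
        rcases Nat.lt_or_gt_of_ne hne with h | h
        · rw [add_comm]
          exact planar_even ha hpl h h1 (by rw [← hp, partner_invol ha h1])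
        · exact planar_even ha hpl h g1 hp
      simp [OddCross, hodd]
    unfold oddWrithe
    rw [this]
    rfl

/-! ## Invariance of the odd writhe -/

/-- The passages of a code, tagged with the parity of their positions. -/
def tagL : Bool → KCode → List (Passage × Bool)
  | _, [] => []
  | b, p :: l => (p, b) :: tagL (!b) l

/-- The multiset of tagged passages. -/
def tagM (b : Bool) (a : KCode) : Multiset (Passage × Bool) := (tagL b a : Multiset _)

/-- Shift a parity by `n`. -/
def shf (b : Bool) (n : ℕ) : Bool := if Even n then b else !b

theorem shf_succ (b : Bool) (n : ℕ) : shf b (n + 1) = shf (!b) n := by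
  unfold shf
  by_cases h : Even n <;> simp [h, Nat.even_add_one]

theorem tagL_append (b : Bool) (x y : KCode) :
    tagL b (x ++ y) = tagL b x ++ tagL (shf b x.length) y := by
  induction x generalizing b with
  | nil => simp [tagL, shf]
  | cons p x ih => simp [tagL, ih, shf_succ]

theorem tagM_append (b : Bool) (x y : KCode) :
    tagM b (x ++ y) = tagM b x + tagM (shf b x.length) y := by
  simp [tagM, tagL_append]

theorem tagM_nil (b : Bool) : tagM b [] = 0 := rfl

theorem tagM_append_even (b : Bool) (x y : KCode) (hx : Even x.length) :
    tagM b (x ++ y) = tagM b x + tagM b y := by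
  rw [tagM_append]; simp [shf, hx]

theorem tagM_fst (b : Bool) (a : KCode) : (tagM b a).map Prod.fst = (a : Multiset Passage) := by
  have : (tagL b a).map Prod.fst = a := by
    induction a generalizing b with
    | nil => rfl
    | cons p l ih => simp [tagL, ih]
  simp [tagM, this]

theorem tagM_not (b : Bool) (a : KCode) :
    tagM (!b) a = (tagM b a).map (fun x => (x.1, !x.2)) := by
  have : tagL (!b) a = (tagL b a).map (fun x => (x.1, !x.2)) := by
    induction a generalizing b with
    | nil => rfl
    | cons p l ih =>
      simp only [tagL, List.map_cons]
      rw [ih (!b)]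
  simp [tagM, this]

theorem tagM_relabel (b : Bool) (f : ℕ → ℕ) (a : KCode) :
    tagM b (relabel f a) = (tagM b a).map (fun x => ({ x.1 with id := f x.1.id }, x.2)) := by
  have : tagL b (relabel f a) = (tagL b a).map (fun x => ({ x.1 with id := f x.1.id }, x.2)) := by
    induction a generalizing b with
    | nil => rfl
    | cons p l ih => simpa [tagL, relabel] using ih (!b)
  simp [tagM, this]

theorem tagL_eq (b : Bool) (a : KCode) :
    tagL b a = (List.range a.length).map (fun k => (pas a k, shf b k)) := by
  induction a generalizing b with
  | nil => rfl
  | cons p l ih =>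
    simp only [tagL, List.length_cons, List.range_succ_eq_map, List.map_cons, List.map_map, ih]
    congr 1
    apply List.map_congr_left
    intro k _
    simp [pas, shf_succ]

/-- The contribution of a pair of tagged passages to the odd writhe. -/
def pairTerm (x y : Passage × Bool) : ℤ :=
  if x.1.id = y.1.id ∧ x.1.isOver = true ∧ y.1.isOver = false ∧ x.2 = y.2 then x.1.sign else 0

/-- The odd writhe of a multiset of tagged passages. -/
def wri (m : Multiset (Passage × Bool)) : ℤ :=
  (m.map (fun x => (m.map (fun y => pairTerm x y)).sum)).sum

theorem wri_map (m : Multiset (Passage × Bool)) (φ : Passage × Bool → Passage × Bool)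
    (h : ∀ x ∈ m, ∀ y ∈ m, pairTerm (φ x) (φ y) = pairTerm x y) : wri (m.map φ) = wri m := by
  unfold wri
  rw [Multiset.map_map]
  congr 1
  apply Multiset.map_congr rfl
  intro x hx
  simp only [Function.comp, Multiset.map_map]
  congr 1
  exact Multiset.map_congr rfl (fun y hy => h x hx y hy)

theorem wri_add (m n : Multiset (Passage × Bool))
    (h : ∀ x ∈ m, ∀ y ∈ n, x.1.id ≠ y.1.id) : wri (m + n) = wri m + wri n := by
  have h1 : ∀ x ∈ m, (n.map (fun y => pairTerm x y)).sum = 0 := by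
    intro x hx
    apply Multiset.sum_eq_zero
    intro z hz
    obtain ⟨y, hy, rfl⟩ := Multiset.mem_map.1 hz
    exact if_neg (fun e => h x hx y hy e.1)
  have h2 : ∀ x ∈ n, (m.map (fun y => pairTerm x y)).sum = 0 := by
    intro x hx
    apply Multiset.sum_eq_zero
    intro z hz
    obtain ⟨y, hy, rfl⟩ := Multiset.mem_map.1 hz
    exact if_neg (fun e => h y hy x hx e.1.symm)
  unfold wri
  simp only [Multiset.map_add, Multiset.sum_add]
  congr 1
  · congr 1
    apply Multiset.map_congr rfl
    intro x hx
    rw [h1 x hx, add_zero]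
  · congr 1
    apply Multiset.map_congr rfl
    intro x hx
    rw [h2 x hx, zero_add]

/-- Validity in terms of the multiset of passages. -/
def ValidM (m : Multiset Passage) : Prop :=
  ∀ p ∈ m, (p.sign = 1 ∨ p.sign = -1) ∧
    m.countP (fun q => q.id = p.id ∧ q.isOver = true) = 1 ∧
    m.countP (fun q => q.id = p.id ∧ q.isOver = false) = 1 ∧
    (∀ q ∈ m, q.id = p.id → q.sign = p.sign)

theorem validK_iff (a : KCode) : ValidK a ↔ ValidM (a : Multiset Passage) := by
  unfold ValidK ValidM
  simp only [Multiset.mem_coe, Multiset.coe_countP]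
  have h1 : ∀ p : Passage, (a.filter (fun q => q.id == p.id && q.isOver)).length =
      a.countP (fun q => decide (q.id = p.id ∧ q.isOver = true)) := by
    intro p
    rw [← List.countP_eq_length_filter]
    apply List.countP_congr
    intro q _
    simp
  have h2 : ∀ p : Passage, (a.filter (fun q => q.id == p.id && !q.isOver)).length =
      a.countP (fun q => decide (q.id = p.id ∧ q.isOver = false)) := by
    intro p
    rw [← List.countP_eq_length_filter]
    apply List.countP_congr
    intro q _
    simp
  simp only [h1, h2]

theorem countP_zero_of_disj (m : Multiset Passage) (i : ℕ) (o : Bool) (h : ∀ x ∈ m, x.id ≠ i) :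
    m.countP (fun q => q.id = i ∧ q.isOver = o) = 0 := by
  rw [Multiset.countP_eq_zero]
  intro q hq hh
  exact h q hq hh.1

theorem validM_add (m n : Multiset Passage) (h : ∀ x ∈ m, ∀ y ∈ n, x.id ≠ y.id) :
    ValidM (m + n) ↔ ValidM m ∧ ValidM n := by
  constructor
  · intro hv
    constructor
    · intro p hp
      obtain ⟨h1, h2, h3, h4⟩ := hv p (Multiset.mem_add.2 (Or.inl hp))
      have hz : ∀ x ∈ n, x.id ≠ p.id := fun x hx => (h p hp x hx).symm
      rw [Multiset.countP_add, countP_zero_of_disj n _ _ hz, add_zero] at h2 h3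
      exact ⟨h1, h2, h3, fun q hq => h4 q (Multiset.mem_add.2 (Or.inl hq))⟩
    · intro p hp
      obtain ⟨h1, h2, h3, h4⟩ := hv p (Multiset.mem_add.2 (Or.inr hp))
      have hz : ∀ x ∈ m, x.id ≠ p.id := fun x hx => h x hx p hp
      rw [Multiset.countP_add, countP_zero_of_disj m _ _ hz, zero_add] at h2 h3
      exact ⟨h1, h2, h3, fun q hq => h4 q (Multiset.mem_add.2 (Or.inr hq))⟩
  · rintro ⟨hm, hn⟩ p hp
    rcases Multiset.mem_add.1 hp with hp | hp
    · obtain ⟨h1, h2, h3, h4⟩ := hm p hp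
      have hz : ∀ x ∈ n, x.id ≠ p.id := fun x hx => (h p hp x hx).symm
      rw [Multiset.countP_add, Multiset.countP_add, countP_zero_of_disj n _ _ hz,
        countP_zero_of_disj n _ _ hz]
      refine ⟨h1, h2, h3, fun q hq e => ?_⟩
      rcases Multiset.mem_add.1 hq with hq | hq
      · exact h4 q hq e
      · exact absurd e (hz q hq)
    · obtain ⟨h1, h2, h3, h4⟩ := hn p hp
      have hz : ∀ x ∈ m, x.id ≠ p.id := fun x hx => h x hx p hp
      rw [Multiset.countP_add, Multiset.countP_add, countP_zero_of_disj m _ _ hz,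
        countP_zero_of_disj m _ _ hz, zero_add, zero_add]
      refine ⟨h1, h2, h3, fun q hq e => ?_⟩
      rcases Multiset.mem_add.1 hq with hq | hq
      · exact absurd e (hz q hq)
      · exact h4 q hq e

theorem validK_relabel (f : ℕ → ℕ) (hf : Function.Injective f) (a : KCode) :
    ValidK (relabel f a) ↔ ValidK a := by
  rw [validK_iff, validK_iff]
  unfold ValidM relabel
  simp only [Multiset.mem_coe, List.forall_mem_map, Multiset.coe_countP, List.countP_map,
    Function.comp_def, hf.eq_iff]

theorem wri_eq_oddWrithe {a : KCode} (ha : ValidK a) : wri (tagM false a) = oddWrithe a := by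
  have hsh : ∀ k l : ℕ, shf false k = shf false l ↔ (k + l) % 2 = 0 := by
    intro k l
    rw [← Nat.even_iff, Nat.even_add]
    unfold shf
    by_cases h1 : Even k <;> by_cases h2 : Even l <;> simp [h1, h2]
  have h1 : wri (tagM false a) = ∑ k ∈ Finset.range a.length, ∑ l ∈ Finset.range a.length,
      pairTerm (pas a k, shf false k) (pas a l, shf false l) := by
    have h0 : tagM false a =
        (Finset.range a.length).val.map (fun k => (pas a k, shf false k)) := by
      unfold tagM
      rw [tagL_eq]
      rfl
    unfold wri
    rw [h0]
    simp only [Multiset.map_map]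
    rfl
  have h2 : oddWrithe a = ∑ i ∈ (crossIds a).toFinset, if OddCross a i then sgn a i else 0 := by
    unfold oddWrithe
    have hn : (crossIds a).Nodup := List.nodup_dedup _
    rw [List.sum_toFinset _ hn]
    clear hn
    induction crossIds a with
    | nil => rfl
    | cons x l ih =>
      by_cases h : OddCross a x <;> simp [h, ih]
  have h3 : ∀ k ∈ Finset.range a.length, ∑ l ∈ Finset.range a.length,
      pairTerm (pas a k, shf false k) (pas a l, shf false l) =
      if (pas a k).isOver = true then
        (if OddCross a (pas a k).id then sgn a (pas a k).id else 0) else 0 := by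
    intro k hk
    rw [Finset.mem_range] at hk
    have hi := id_mem_crossIds hk
    by_cases ho : (pas a k).isOver = true
    · obtain ⟨o1, o2, o3⟩ := overPos_spec ha hi
      obtain ⟨u1, u2, u3⟩ := underPos_spec ha hi
      have hok : overPos a (pas a k).id = k := pas_uniq ha o1 hk o2 (o3.trans ho.symm)
      rw [Finset.sum_eq_single (underPos a (pas a k).id)]
      · rw [if_pos ho, sgn_spec ha hk]
        simp only [pairTerm, u2, u3, ho, hsh, true_and, OddCross, hok, beq_iff_eq]
      · intro l hl hne
        apply if_neg
        rintro ⟨e1, -, e3, -⟩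
        simp only at e1 e3
        exact hne (pas_uniq ha (Finset.mem_range.1 hl) u1 (e1.symm.trans u2.symm)
          (e3.trans u3.symm))
      · intro h
        exact absurd (Finset.mem_range.2 u1) h
    · rw [if_neg ho]
      apply Finset.sum_eq_zero
      intro l _
      exact if_neg (fun e => ho e.2.1)
  rw [h1, Finset.sum_congr rfl h3, ← Finset.sum_filter, h2]
  refine Finset.sum_nbij' (fun k => (pas a k).id) (fun i => overPos a i) ?_ ?_ ?_ ?_ ?_
  · intro k hk
    simp only [Finset.mem_filter, Finset.mem_range] at hk
    exact List.mem_toFinset.2 (id_mem_crossIds hk.1)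
  · intro i hi
    obtain ⟨o1, o2, o3⟩ := overPos_spec ha (List.mem_toFinset.1 hi)
    simp only [Finset.mem_filter, Finset.mem_range]
    exact ⟨o1, o3⟩
  · intro k hk
    simp only [Finset.mem_filter, Finset.mem_range] at hk
    obtain ⟨o1, o2, o3⟩ := overPos_spec ha (id_mem_crossIds hk.1)
    exact pas_uniq ha o1 hk.1 o2 (o3.trans hk.2.symm)
  · intro i hi
    exact (overPos_spec ha (List.mem_toFinset.1 hi)).2.1
  · intro k _
    rfl

/-- The sum of the tagged passages of a list of segments, with given starting parities. -/
def segSum (bs : List Bool) (us : List KCode) : Multiset (Passage × Bool) :=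
  (List.zipWith tagM bs us).sum

theorem replC_tag {c c' : KCode} {segs segs' : List (KCode × KCode)} (h : ReplC c c' segs segs')
    (hs : segs' = []) (hev : ∀ s ∈ segs, Even s.1.length ∧ Even s.2.length) (b : Bool) :
    ∃ (R : Multiset (Passage × Bool)) (bs : List Bool), bs.length = segs.length ∧
      tagM b c = R + segSum bs (segs.map Prod.fst) ∧
      tagM b c' = R + segSum bs (segs.map Prod.snd) := by
  induction h generalizing b with
  | nil c segs =>
    subst hs
    exact ⟨tagM b c, [], rfl, by simp [segSum], by simp [segSum]⟩
  | @cons y y' segs segs' x u v h ih =>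
    obtain ⟨h1, h2⟩ := hev (u, v) (by simp)
    obtain ⟨R, bs, e1, e2, e3⟩ := ih hs (fun s hs => hev s (by simp [hs])) (shf b x.length)
    refine ⟨tagM b x + R, shf b x.length :: bs, by simp [e1], ?_, ?_⟩
    · rw [List.append_assoc, tagM_append, tagM_append_even _ _ _ h1, e2]
      simp only [segSum, List.map_cons, List.zipWith_cons_cons, List.sum_cons]
      abel
    · rw [List.append_assoc, tagM_append, tagM_append_even _ _ _ h2, e3]
      simp only [segSum, List.map_cons, List.zipWith_cons_cons, List.sum_cons]
      abel

theorem replL_length {L L' : LLC} {segs : List (KCode × KCode)} (h : ReplL L L' segs) :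
    L.length = L'.length := by
  induction h with
  | nil => rfl
  | cons k h h' ih => simp [ih]

theorem replL_single {k k' : ℕ} {c c' : KCode} {segs : List (KCode × KCode)}
    (h : ReplL [(k, c)] [(k', c')] segs) : ReplC c c' segs [] := by
  cases h with
  | cons k h h' =>
    cases h'
    exact h

/-- The two codes are simultaneously valid, and then have the same odd writhe. -/
def SameW (c c' : KCode) : Prop :=
  (ValidK c ↔ ValidK c') ∧ (ValidK c → wri (tagM false c) = wri (tagM false c'))

/-- `L` is a valid knot with odd writhe `v`. -/
def HasW (L : LLC) (v : ℤ) : Prop :=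
  ∃ k c, L = [(k, c)] ∧ ValidK c ∧ wri (tagM false c) = v

theorem hasW_iff {L L' : LLC} (hlen : L.length = L'.length)
    (h : ∀ k c k' c', L = [(k, c)] → L' = [(k', c')] → SameW c c') (v : ℤ) :
    HasW L v ↔ HasW L' v := by
  constructor
  · rintro ⟨k, c, rfl, hv, hw⟩
    obtain ⟨⟨k', c'⟩, rfl⟩ := List.length_eq_one_iff.1 hlen.symm
    obtain ⟨h1, h2⟩ := h k c k' c' rfl rfl
    exact ⟨k', c', rfl, h1.1 hv, (h2 hv).symm.trans hw⟩
  · rintro ⟨k', c', rfl, hv, hw⟩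
    obtain ⟨⟨k, c⟩, rfl⟩ := List.length_eq_one_iff.1 hlen
    obtain ⟨h1, h2⟩ := h k c k' c' rfl rfl
    exact ⟨k, c, rfl, h1.2 hv, (h2 (h1.2 hv)).trans hw⟩

/-- Inserting passages of fresh crossings with total contribution zero. -/
theorem sameW_insert {c c' : KCode} {N : Multiset (Passage × Bool)}
    (h : tagM false c' = tagM false c + N)
    (hfresh : ∀ y ∈ N, ∀ x ∈ c, x.id ≠ y.1.id) (hN : ValidM (N.map Prod.fst))
    (hw : wri N = 0) : SameW c c' := by
  have hc : (c' : Multiset Passage) = (c : Multiset Passage) + N.map Prod.fst := by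
    rw [← tagM_fst false, h, Multiset.map_add, tagM_fst]
  refine ⟨?_, fun _ => ?_⟩
  · rw [validK_iff, validK_iff, hc, validM_add]
    · simp [hN]
    · intro x hx y hy
      obtain ⟨z, hz, rfl⟩ := Multiset.mem_map.1 hy
      exact hfresh z hz x hx
  · rw [h, wri_add, hw, add_zero]
    intro x hx y hy
    apply hfresh y hy
    have := Multiset.mem_map_of_mem Prod.fst hx
    rwa [tagM_fst] at this

theorem not_mem_idsOf {k : ℕ} {c : KCode} {i : ℕ} (h : i ∉ idsOf [(k, c)]) :
    ∀ x ∈ c, x.id ≠ i := by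
  intro x hx e
  apply h
  simp only [idsOf, crossIdsL, crossIds, plainL, List.map_cons, List.map_nil, List.flatten_cons,
    List.flatten_nil, List.append_nil, List.mem_dedup, List.mem_map]
  exact ⟨x, hx, e⟩

theorem sameW_r1 {c c' : KCode} {i : ℕ} {o : Bool} {s : ℤ} (hs : s = 1 ∨ s = -1)
    (hi : ∀ x ∈ c, x.id ≠ i) (h : ReplC c c' [([], [⟨i, o, s⟩, ⟨i, !o, s⟩])] []) :
    SameW c c' := by
  obtain ⟨R, bs, e1, e2, e3⟩ := replC_tag h rfl (by simp) false
  obtain ⟨b, rfl⟩ := List.length_eq_one_iff.1 e1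
  simp only [segSum, List.map_cons, List.map_nil, List.zipWith_cons_cons, List.zipWith_nil_right,
    List.sum_cons, List.sum_nil, tagM_nil, add_zero] at e2 e3
  rw [← e2] at e3
  refine sameW_insert e3 ?_ ?_ ?_
  · intro y hy
    simp [tagM, tagL] at hy
    rcases hy with rfl | rfl <;> exact hi
  · rw [tagM_fst]
    intro p hp
    simp at hp
    rcases hp with rfl | rfl <;> cases o <;> simp [hs]
  · cases o <;> cases b <;> simp [wri, tagM, tagL, pairTerm]

theorem sameW_r2 {c c' : KCode} {i j : ℕ} {o ord : Bool} {s : ℤ} (hs : s = 1 ∨ s = -1)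
    (hij : i ≠ j) (hi : ∀ x ∈ c, x.id ≠ i) (hj : ∀ x ∈ c, x.id ≠ j)
    (h : ReplC c c' [([], [⟨i, o, s⟩, ⟨j, o, -s⟩]),
         ([], if ord then [⟨j, !o, -s⟩, ⟨i, !o, s⟩] else [⟨i, !o, s⟩, ⟨j, !o, -s⟩])] []) :
    SameW c c' := by
  obtain ⟨R, bs, e1, e2, e3⟩ := replC_tag h rfl (by cases ord <;> simp) false
  obtain ⟨b, b', rfl⟩ := List.length_eq_two.1 e1
  simp only [segSum, List.map_cons, List.map_nil, List.zipWith_cons_cons, List.zipWith_nil_right,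
    List.sum_cons, List.sum_nil, tagM_nil, add_zero] at e2 e3
  rw [← e2] at e3
  have hs' : -s = 1 ∨ -s = -1 := by omega
  refine sameW_insert e3 ?_ ?_ ?_
  · intro y hy
    cases ord <;> simp [tagM, tagL] at hy <;> rcases hy with rfl | rfl | rfl | rfl <;> assumption
  · rw [Multiset.map_add, tagM_fst, tagM_fst]
    intro p hp
    cases ord <;> simp at hp <;> rcases hp with rfl | rfl | rfl | rfl <;> cases o <;>
      simp [hij, hij.symm] <;> omega
  · cases ord <;> cases o <;> cases b <;> cases b' <;>
      simp [wri, tagM, tagL, pairTerm, hij, hij.symm]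

theorem coe_pairOf (b : Bool) (p q : Passage) :
    (pairOf b p q : Multiset Passage) = {p, q} := by
  cases b
  · exact Multiset.cons_swap q p 0
  · rfl

/-- Flip the parities of the passages through the crossings `i`, `j`, `k`. -/
def flip3 (i j k : ℕ) (x : Passage × Bool) : Passage × Bool :=
  (x.1, if x.1.id = i ∨ x.1.id = j ∨ x.1.id = k then !x.2 else x.2)

theorem tagM_pairOf_flip (i j k : ℕ) (b t : Bool) (p q : Passage)
    (hp : p.id = i ∨ p.id = j ∨ p.id = k) (hq : q.id = i ∨ q.id = j ∨ q.id = k) :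
    tagM b (pairOf (!t) p q) = (tagM b (pairOf t p q)).map (flip3 i j k) := by
  have h2 : ∀ p q : Passage, tagM b [p, q] = (p, b) ::ₘ (q, !b) ::ₘ 0 := fun _ _ => rfl
  have hb : pairOf true p q = [p, q] := rfl
  have hb' : pairOf false p q = [q, p] := rfl
  cases t
  · simp only [Bool.not_false, hb, hb', h2, Multiset.map_cons, Multiset.map_zero, flip3, if_pos hp,
      if_pos hq, Bool.not_not]
    exact Multiset.cons_swap _ _ _
  · simp only [Bool.not_true, hb, hb', h2, Multiset.map_cons, Multiset.map_zero, flip3, if_pos hp,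
      if_pos hq, Bool.not_not]
    exact Multiset.cons_swap _ _ _

theorem segSum_map (φ : Passage × Bool → Passage × Bool) (segs : List (KCode × KCode))
    (h : ∀ s ∈ segs, ∀ b, tagM b s.2 = (tagM b s.1).map φ) (bs : List Bool) :
    segSum bs (segs.map Prod.snd) = (segSum bs (segs.map Prod.fst)).map φ := by
  induction segs generalizing bs with
  | nil => simp [segSum]
  | cons s segs ih =>
    cases bs with
    | nil => simp [segSum]
    | cons b bs =>
      have := ih (fun s hs => h s (by simp [hs])) bs
      simp only [segSum] at this
      simp only [segSum, List.map_cons, List.zipWith_cons_cons, List.sum_cons, Multiset.map_add,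
        this, h s (by simp)]

theorem segSum_fst (us : List KCode) (bs : List Bool) (h : bs.length = us.length) :
    (segSum bs us).map Prod.fst = (us.map (fun u : KCode => Multiset.ofList u)).sum := by
  induction us generalizing bs with
  | nil => simp [segSum]
  | cons u us ih =>
    cases bs with
    | nil => simp at h
    | cons b bs =>
      have := ih bs (by simpa using h)
      simp only [segSum] at this
      simp only [segSum, List.map_cons, List.zipWith_cons_cons, List.sum_cons, Multiset.map_add,
        this, tagM_fst]

theorem sameW_r3 {c c' : KCode} {i j k : ℕ} {si sj sk : ℤ} (t1 t2 t3 : Bool)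
    (segs : List (KCode × KCode))
    (hsegs : segs.Perm
        [(pairOf t1 ⟨i, true, si⟩ ⟨j, true, sj⟩, pairOf (!t1) ⟨i, true, si⟩ ⟨j, true, sj⟩),
         (pairOf t2 ⟨i, false, si⟩ ⟨k, true, sk⟩, pairOf (!t2) ⟨i, false, si⟩ ⟨k, true, sk⟩),
         (pairOf t3 ⟨j, false, sj⟩ ⟨k, false, sk⟩, pairOf (!t3) ⟨j, false, sj⟩ ⟨k, false, sk⟩)])
    (h : ReplC c c' segs []) : SameW c c' := by
  have hlen : ∀ b p q, (pairOf b p q).length = 2 := by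
    intro b p q; cases b <;> rfl
  obtain ⟨R, bs, e1, e2, e3⟩ := replC_tag h rfl (by
    intro s hs
    have := hsegs.mem_iff.1 hs
    simp only [List.mem_cons, List.not_mem_nil, or_false] at this
    rcases this with rfl | rfl | rfl <;> simp [hlen]) false
  have hφ := segSum_map (flip3 i j k) segs (by
    intro s hs b
    have := hsegs.mem_iff.1 hs
    simp only [List.mem_cons, List.not_mem_nil, or_false] at this
    rcases this with rfl | rfl | rfl <;> apply tagM_pairOf_flip <;> simp) bs
  have hS : (segSum bs (segs.map Prod.fst)).map Prod.fst =
      {⟨i, true, si⟩, ⟨j, true, sj⟩} + ({⟨i, false, si⟩, ⟨k, true, sk⟩} +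
        {⟨j, false, sj⟩, ⟨k, false, sk⟩}) := by
    rw [segSum_fst _ _ (by simp [e1]), ((hsegs.map Prod.fst).map _).sum_eq]
    simp [coe_pairOf]
  have hc : (c : Multiset Passage) = R.map Prod.fst +
      (segSum bs (segs.map Prod.fst)).map Prod.fst := by
    rw [← tagM_fst false, e2, Multiset.map_add]
  have hc' : (c' : Multiset Passage) = (c : Multiset Passage) := by
    rw [hc, ← tagM_fst false, e3, Multiset.map_add, hφ, Multiset.map_map]
    rfl
  refine ⟨by rw [validK_iff, validK_iff, hc'], fun hv => ?_⟩
  rw [validK_iff, hc, hS] at hv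
  have hR : ∀ x ∈ R, ¬ (x.1.id = i ∨ x.1.id = j ∨ x.1.id = k) := by
    intro x hx hid
    have hx' : x.1 ∈ R.map Prod.fst := Multiset.mem_map_of_mem _ hx
    obtain ⟨-, h1, h2, -⟩ := hv x.1 (Multiset.mem_add.2 (Or.inl hx'))
    rw [Multiset.countP_add] at h1 h2
    cases ho : x.1.isOver
    · have hpos : 0 < (R.map Prod.fst).countP (fun q => q.id = x.1.id ∧ q.isOver = false) :=
        Multiset.countP_pos.2 ⟨x.1, hx', rfl, ho⟩
      have hz : Multiset.countP (fun q : Passage => q.id = x.1.id ∧ q.isOver = false)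
        ({⟨i, true, si⟩, ⟨j, true, sj⟩} + ({⟨i, false, si⟩, ⟨k, true, sk⟩} +
        {⟨j, false, sj⟩, ⟨k, false, sk⟩}) : Multiset Passage) = 0 := by omega
      rw [Multiset.countP_eq_zero] at hz
      rcases hid with e | e | e
      · exact hz ⟨i, false, si⟩ (by simp) ⟨e.symm, rfl⟩
      · exact hz ⟨j, false, sj⟩ (by simp) ⟨e.symm, rfl⟩
      · exact hz ⟨k, false, sk⟩ (by simp) ⟨e.symm, rfl⟩
    · have hpos : 0 < (R.map Prod.fst).countP (fun q => q.id = x.1.id ∧ q.isOver = true) :=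
        Multiset.countP_pos.2 ⟨x.1, hx', rfl, ho⟩
      have hz : Multiset.countP (fun q : Passage => q.id = x.1.id ∧ q.isOver = true)
        ({⟨i, true, si⟩, ⟨j, true, sj⟩} + ({⟨i, false, si⟩, ⟨k, true, sk⟩} +
        {⟨j, false, sj⟩, ⟨k, false, sk⟩}) : Multiset Passage) = 0 := by omega
      rw [Multiset.countP_eq_zero] at hz
      rcases hid with e | e | e
      · exact hz ⟨i, true, si⟩ (by simp) ⟨e.symm, rfl⟩
      · exact hz ⟨j, true, sj⟩ (by simp) ⟨e.symm, rfl⟩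
      · exact hz ⟨k, true, sk⟩ (by simp) ⟨e.symm, rfl⟩
  have hRφ : R.map (flip3 i j k) = R := by
    conv_rhs => rw [← Multiset.map_id R]
    apply Multiset.map_congr rfl
    intro x hx
    simp only [flip3, if_neg (hR x hx), id]
  have htag : tagM false c' = (tagM false c).map (flip3 i j k) := by
    rw [e2, e3, Multiset.map_add, hRφ, hφ]
  rw [htag, wri_map]
  intro x _ y _
  unfold pairTerm flip3
  by_cases e : x.1.id = y.1.id
  · simp only [e, true_and]
    by_cases hh : y.1.id = i ∨ y.1.id = j ∨ y.1.id = k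
    · simp only [if_pos hh, Bool.not_inj_iff]
    · simp only [if_neg hh]
  · simp [e]

theorem sameW_refl (c : KCode) : SameW c c := ⟨Iff.rfl, fun _ => rfl⟩

theorem sameW_rotate (x y : KCode) : SameW (x ++ y) (y ++ x) := by
  refine ⟨?_, fun hv => ?_⟩
  · rw [validK_iff, validK_iff]
    have : ((x ++ y : KCode) : Multiset Passage) = ((y ++ x : KCode) : Multiset Passage) :=
      Multiset.coe_eq_coe.2 List.perm_append_comm
    rw [this]
  · have hev := valid_even hv
    rw [List.length_append, Nat.even_add] at hev
    rw [tagM_append, tagM_append]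
    by_cases hx : Even x.length
    · have hy := hev.1 hx
      simp only [shf, if_pos hx, if_pos hy, add_comm]
    · have hy : ¬ Even y.length := fun h => hx (hev.2 h)
      simp only [shf, if_neg hx, if_neg hy]
      rw [tagM_not false x, tagM_not false y]
      have : tagM false y + (tagM false x).map (fun x => (x.1, !x.2)) =
          (tagM false x + (tagM false y).map (fun x => (x.1, !x.2))).map
            (fun x => (x.1, !x.2)) := by
        rw [Multiset.map_add, Multiset.map_map, add_comm]
        congr 1
        conv_lhs => rw [← Multiset.map_id (tagM false y)]
        apply Multiset.map_congr rfl
        intro z _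
        simp
      rw [this, wri_map]
      intro u _ v _
      simp [pairTerm]

theorem sameW_rename (f : ℕ → ℕ) (hf : Function.Injective f) (c : KCode) :
    SameW c (relabel f c) := by
  refine ⟨(validK_relabel f hf c).symm, fun _ => ?_⟩
  rw [tagM_relabel, wri_map]
  intro x _ y _
  simp [pairTerm, hf.eq_iff]

theorem moveStep_hasW {L L' : LLC} (h : MoveStep L L') (v : ℤ) : HasW L v ↔ HasW L' v := by
  cases h with
  | perm h =>
    apply hasW_iff h.length_eq
    rintro k c k' c' rfl rfl
    have := List.singleton_perm_singleton.1 h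
    simp only [Prod.mk.injEq] at this
    rw [this.2]
    exact sameW_refl _
  | rotate k x y L =>
    apply hasW_iff (by simp)
    intro k c k' c' h1 h2
    simp only [List.cons.injEq, Prod.mk.injEq] at h1 h2
    rw [← h1.1.2, ← h2.1.2]
    exact sameW_rotate x y
  | rename f hf =>
    apply hasW_iff (by simp)
    rintro k c k' c' rfl h2
    simp only [List.map_cons, List.map_nil, List.cons.injEq, Prod.mk.injEq] at h2
    rw [← h2.1.2]
    exact sameW_rename f hf c
  | r1 i o s hs hi h =>
    apply hasW_iff (replL_length h)
    rintro k c k' c' rfl rfl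
    exact sameW_r1 hs (not_mem_idsOf hi) (replL_single h)
  | r2 i j o ord s hs hij hi hj h =>
    apply hasW_iff (replL_length h)
    rintro k c k' c' rfl rfl
    exact sameW_r2 hs hij (not_mem_idsOf hi) (not_mem_idsOf hj) (replL_single h)
  | r3 i j k si sj sk hsi hsj hsk hprod hij hik hjk t segs hsegs h =>
    apply hasW_iff (replL_length h)
    rintro k c k' c' rfl rfl
    exact sameW_r3 _ _ _ segs hsegs (replL_single h)

theorem isotopic_hasW {L L' : LLC} (h : Isotopic L L') (v : ℤ) : HasW L v ↔ HasW L' v := by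
  induction h with
  | rel _ _ h => exact moveStep_hasW h v
  | refl _ => exact Iff.rfl
  | symm _ _ _ ih => exact ih.symm
  | trans _ _ _ _ _ ih1 ih2 => exact ih1.trans ih2

/-- The odd writhe is an invariant of virtual isotopy. -/
theorem oddWrithe_isotopic {a b : KCode} (ha : ValidK a) (h : Isotopic [(0, a)] [(0, b)]) :
    oddWrithe b = oddWrithe a := by
  obtain ⟨k, c, e, hc, hw⟩ := (isotopic_hasW h (oddWrithe a)).1
    ⟨0, a, rfl, ha, wri_eq_oddWrithe ha⟩
  simp only [List.cons.injEq, Prod.mk.injEq, and_true] at e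
  rw [← e.2] at hc hw
  rw [← wri_eq_oddWrithe hc, hw]

/-- For any virtual knot diagram `K`, the odd writhe
satisfies `J(K*) = -J(K)`, where `K*` is the mirror image of `K` (obtained by
switching all classical crossings); consequently, if `J(K)` is nonzero then
`K` is not equivalent to any classical knot and `K` is not equivalent to its
mirror image (`K` is chiral). -/
theorem odd_writhe_mirror_chirality (a : KCode) (ha : ValidK a) :
    oddWrithe (switchAll a) = - oddWrithe a ∧
    (oddWrithe a ≠ 0 →
      (∀ b : KCode, ValidK b → IsClassical b → ¬ Isotopic [(0, a)] [(0, b)]) ∧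
      ¬ Isotopic [(0, a)] [(0, switchAll a)]) := by
  refine ⟨oddWrithe_switchAll a, fun hJ => ⟨?_, ?_⟩⟩
  · intro b hb hc h
    apply hJ
    rw [← oddWrithe_isotopic ha h, oddWrithe_classical hb hc]
  · intro h
    have h1 := oddWrithe_isotopic ha h
    rw [oddWrithe_switchAll] at h1
    omega
end
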